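/- arXiv:2009.13107 — 3 statements merged into one kernel-verified Lean document; each statement's English description precedes it below -/
import Mathlib

section
/- Let r ≥ 1 and let a : Fin r → Fin r → Fin r → Fin r → ℂ be any family of complex numbers. For j, k ∈ Fin r, let M(j,k) denote the r×r matrix whose (λ,μ)-entry is a j k λ μ. Then Σ_{σ,ρ,μ ∈ S_r} sign(σ)·sign(ρ)·sign(μ)·Π_{i=1}^{r} a (ρ(i)) (μ(i)) i (σ(i)) = r! · Σ_{τ ∈ S_r} sign(τ)·D(M(1,τ(1)), …, M(r,τ(r))). -/
open Matrix

/-- The mixed discriminant of r×r complex matrices A₁,…,A_r: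
`(1/r!)·Σ_{σ∈S_r} det(B_σ)` where `B_σ` has (i,k)-entry `(A_{σ(i)})_{i,k}`. -/
noncomputable def mixedDiscriminant {r : ℕ} (A : Fin r → Matrix (Fin r) (Fin r) ℂ) : ℂ :=
  (1 / (r.factorial : ℂ)) *
    ∑ σ : Equiv.Perm (Fin r), (Matrix.of fun i k => A (σ i) i k).det

/-!
Summing over `σ` first turns the left-hand side into
`∑ ρ μ, sign ρ * sign μ * det (a (ρ i) (μ i) i k)`. For fixed `ρ` the substitution `μ = τ * ρ`
leaves the sign of `τ`, and the sum over `ρ` of the resulting determinants is `r!` times the mixed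
discriminant of the matrices `M(i, τ i)`.
-/

section PolarizedDet

open Equiv

variable {n : Type*} [Fintype n] [DecidableEq n]

theorem sum_sign_mul_sign_mul_eq_sum_sign_mul_comp {R : Type*} [Ring R]
    (ρ : Perm n) (f : Perm n → R) :
    ∑ μ : Perm n, ((Perm.sign ρ : ℤ) : R) * ((Perm.sign μ : ℤ) : R) * f μ =
      ∑ τ : Perm n, ((Perm.sign τ : ℤ) : R) * f (τ * ρ) := by
  have sign_cancel (τ : Perm n) : Perm.sign ρ * Perm.sign (τ * ρ) = Perm.sign τ := by
    rw [Perm.sign_mul, mul_left_comm, Int.units_mul_self, mul_one]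
  rw [← Equiv.sum_comp (Equiv.mulRight ρ)]
  simp only [Equiv.coe_mulRight, ← Int.cast_mul, ← Units.val_mul, sign_cancel]

variable {R : Type*} [CommRing R]

/-- The full polarization of the determinant, as a symmetric multilinear function of matrices
indexed by `n`: the mixed discriminant without the factor `1 / r!`, so that it makes sense over any
commutative ring. -/
def polarizedDet (A : n → Matrix n n R) : R :=
  ∑ σ : Perm n, (Matrix.of fun i k => A (σ i) i k).det

theorem det_eq_sum_sign_mul_prod_row (M : Matrix n n R) :
    M.det = ∑ σ : Perm n, ((Perm.sign σ : ℤ) : R) * ∏ i, M i (σ i) := by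
  simp only [← Matrix.det_transpose M, Matrix.det_apply', Matrix.transpose_apply]

theorem det_eq_double_mixed_discriminant_coordinates_general (a : n → n → n → n → R) :
    (∑ σ : Perm n, ∑ ρ : Perm n, ∑ μ : Perm n,
        ((Perm.sign σ : ℤ) : R) * ((Perm.sign ρ : ℤ) : R) * ((Perm.sign μ : ℤ) : R) *
          ∏ i, a (ρ i) (μ i) i (σ i)) =
      ∑ τ : Perm n, ((Perm.sign τ : ℤ) : R) *
        polarizedDet (fun i => Matrix.of fun lam mu => a i (τ i) lam mu) := by
  calc
    _ = ∑ ρ : Perm n, ∑ μ : Perm n, ((Perm.sign ρ : ℤ) : R) * ((Perm.sign μ : ℤ) : R) *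
          (Matrix.of fun i k => a (ρ i) (μ i) i k).det := by
      rw [Finset.sum_comm]
      refine Finset.sum_congr rfl fun ρ _ => ?_
      rw [Finset.sum_comm]
      refine Finset.sum_congr rfl fun μ _ => ?_
      rw [det_eq_sum_sign_mul_prod_row, Finset.mul_sum]
      refine Finset.sum_congr rfl fun σ _ => ?_
      simp only [Matrix.of_apply]
      ring
    _ = ∑ ρ : Perm n, ∑ τ : Perm n, ((Perm.sign τ : ℤ) : R) *
          (Matrix.of fun i k => a (ρ i) (τ (ρ i)) i k).det :=
      Finset.sum_congr rfl fun ρ _ => sum_sign_mul_sign_mul_eq_sum_sign_mul_comp ρ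
        fun μ => (Matrix.of fun i k => a (ρ i) (μ i) i k).det
    _ = _ := by
      rw [Finset.sum_comm]
      simp only [polarizedDet, Finset.mul_sum, Matrix.of_apply]

end PolarizedDet

theorem factorial_mul_mixedDiscriminant {r : ℕ} (A : Fin r → Matrix (Fin r) (Fin r) ℂ) :
    (r.factorial : ℂ) * mixedDiscriminant A = polarizedDet A := by
  have factorial_ne_zero : (r.factorial : ℂ) ≠ 0 := mod_cast r.factorial_ne_zero
  rw [mixedDiscriminant, polarizedDet, ← mul_assoc, mul_one_div_cancel factorial_ne_zero, one_mul]

theorem det_eq_double_mixed_discriminant_coordinates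
    (r : ℕ) (hr : 1 ≤ r) (a : Fin r → Fin r → Fin r → Fin r → ℂ) :
    (∑ σ : Equiv.Perm (Fin r), ∑ ρ : Equiv.Perm (Fin r), ∑ μ : Equiv.Perm (Fin r),
        ((Equiv.Perm.sign σ : ℤ) : ℂ) * ((Equiv.Perm.sign ρ : ℤ) : ℂ) *
          ((Equiv.Perm.sign μ : ℤ) : ℂ) * ∏ i : Fin r, a (ρ i) (μ i) i (σ i)) =
      (r.factorial : ℂ) *
        ∑ τ : Equiv.Perm (Fin r),
          ((Equiv.Perm.sign τ : ℤ) : ℂ) *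
            mixedDiscriminant (fun i => Matrix.of fun lam mu => a i (τ i) lam mu) := by
  simp only [det_eq_double_mixed_discriminant_coordinates_general, Finset.mul_sum,
    mul_left_comm (r.factorial : ℂ), factorial_mul_mixedDiscriminant]
end

section
/- Let n ≥ r ≥ 1, let M be a ℂ-module, let v : Fin n → M be any family of elements, and let a : Fin n → Fin n → Fin r → Fin r → ℂ be any family of complex numbers. Then, in the r-th exterior power ⋀[ℂ]^r M, Σ_{σ,μ ∈ S_r} sign(σ)·sign(μ) · (w₁^{σ,μ} ∧ ⋯ ∧ w_r^{σ,μ}) = Σ_{σ,μ ∈ S_r} sign(σ)·sign(μ) · (u₁^{σ,μ} ∧ ⋯ ∧ u_r^{σ,μ}), where w_i^{σ,μ} := Σ_{k=1}^{n} a (μ(i)) k i (σ(i)) · v_k and u_i^{σ,μ} := Σ_{k=1}^{n} a i k (σ(i)) (μ(i)) · v_k. -/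
open Matrix

/-!
For an alternating map `f` in the variables `ι` and a family `w` of vectors with three indices in
`ι`, put `F (α, β, γ) = sign α * sign β * sign γ • f (fun i => w (α i) (β i) (γ i))` for
permutations `α, β, γ`. Multiplying all three by the same `τ` on the right changes the coefficient
by `sign τ ^ 3` and the value of `f` by `sign τ`, so `F` is constant on the left cosets of the
diagonal. Each coset has one representative with `β = 1` and one with `α = 1`; the two sides of the
identity are the sums of `F` over these two systems of representatives.
-/

open Equiv.Perm (sign)

section AlternatingMap

variable {R M N ι : Type*} [Semiring R] [AddCommMonoid M] [Module R M] [AddCommGroup N] [Module R N]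
  [Fintype ι] [DecidableEq ι] (f : M [⋀^ι]→ₗ[R] N) (w : ι → ι → ι → M)

theorem sign_mul_sign_mul_sign_smul_map_mul_right (α β γ τ : Equiv.Perm ι) :
    (sign (α * τ) * sign (β * τ) * sign (γ * τ)) •
        f (fun i => w ((α * τ) i) ((β * τ) i) ((γ * τ) i)) =
      (sign α * sign β * sign γ) • f (fun i => w (α i) (β i) (γ i)) := by
  have map_mul_right : f (fun i => w ((α * τ) i) ((β * τ) i) ((γ * τ) i)) =
      sign τ • f (fun i => w (α i) (β i) (γ i)) :=
    f.map_perm (fun i => w (α i) (β i) (γ i)) τ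
  have sign_mul_right : sign (α * τ) * sign (β * τ) * sign (γ * τ) * sign τ =
      sign α * sign β * sign γ := by
    calc
      _ = sign α * sign β * sign γ * (sign τ * sign τ) * (sign τ * sign τ) := by
        simp only [Equiv.Perm.sign_mul]; ac_rfl
      _ = sign α * sign β * sign γ := by simp only [Int.units_mul_self, mul_one]
  rw [map_mul_right, smul_smul, sign_mul_right]

theorem exterior_power_curvature_tensor_identity_general :
    ∑ σ : Equiv.Perm ι, ∑ μ : Equiv.Perm ι,
        (sign σ * sign μ) • f (fun i => w (μ i) i (σ i)) =
      ∑ σ : Equiv.Perm ι, ∑ μ : Equiv.Perm ι,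
        (sign σ * sign μ) • f (fun i => w i (σ i) (μ i)) := by
  rw [Finset.sum_comm]
  refine Fintype.sum_equiv (Equiv.inv _) _ _ fun μ =>
    Fintype.sum_equiv (Equiv.mulRight μ⁻¹) _ _ fun σ => ?_
  have translate_by_inv := sign_mul_sign_mul_sign_smul_map_mul_right f w μ 1 σ μ⁻¹
  simpa [mul_comm (sign σ)] using translate_by_inv.symm

end AlternatingMap

theorem exterior_power_curvature_tensor_identity
    (n r : ℕ) (hr : 1 ≤ r) (hrn : r ≤ n)
    (M : Type*) [AddCommGroup M] [Module ℂ M]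
    (v : Fin n → M) (a : Fin n → Fin n → Fin r → Fin r → ℂ) :
    (∑ σ : Equiv.Perm (Fin r), ∑ μ : Equiv.Perm (Fin r),
        (((Equiv.Perm.sign σ : ℤ) * (Equiv.Perm.sign μ : ℤ) : ℤ) : ℂ) •
          ExteriorAlgebra.ιMulti ℂ r (fun i => ∑ k : Fin n, a (Fin.castLE hrn (μ i)) k i (σ i) • v k)) =
      ∑ σ : Equiv.Perm (Fin r), ∑ μ : Equiv.Perm (Fin r),
        (((Equiv.Perm.sign σ : ℤ) * (Equiv.Perm.sign μ : ℤ) : ℤ) : ℂ) •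
          ExteriorAlgebra.ιMulti ℂ r (fun i => ∑ k : Fin n, a (Fin.castLE hrn i) k (σ i) (μ i) • v k) := by
  simpa only [Int.cast_smul_eq_zsmul, Units.smul_def, Units.val_mul] using
    exterior_power_curvature_tensor_identity_general (ExteriorAlgebra.ιMulti ℂ r)
      fun p i j => ∑ k : Fin n, a (Fin.castLE hrn p) k i j • v k
end

section
/- Let n, r ≥ 1 with n·r ≤ 6 or min(n,r) = 1. Then every linear map H : Matrix (Fin n) (Fin n) ℂ →ₗ[ℂ] Matrix (Fin r) (Fin r) ℂ that maps every positive semidefinite matrix to a positive semidefinite matrix is decomposable. -/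
open Matrix ComplexOrder

/-- A linear map `H` on matrices is decomposable if
`H(X) = Σ_p V_pᴴ·X·V_p + Σ_p W_pᴴ·Xᵀ·W_p` for some matrices `V_p`, `W_p`. -/
def IsDecomposableMap {n r : ℕ}
    (H : Matrix (Fin n) (Fin n) ℂ →ₗ[ℂ] Matrix (Fin r) (Fin r) ℂ) : Prop :=
  ∃ (N : ℕ) (V W : Fin N → Matrix (Fin n) (Fin r) ℂ),
    ∀ X : Matrix (Fin n) (Fin n) ℂ,
      H X = (∑ p, (V p)ᴴ * X * V p) + ∑ p, (W p)ᴴ * Xᵀ * W p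

/-!
By Hahn–Banach separation, `H` is decomposable as soon as its Choi matrix pairs nonnegatively with
every matrix on `ℂⁿ ⊗ ℂʳ` that is positive semidefinite together with its partial transpose (PPT);
positivity of `H` says exactly that the pairing is nonnegative on product vectors. If one dimension
is `1`, every vector is a product vector and the Choi matrix is positive semidefinite.

On `ℂ² ⊗ ℂᵐ` with `m ≤ 3`, by Krein–Milman it suffices that every extreme ray of the PPT cone is
spanned by a product vector. Compressing to the range of a diagonal block, the ray is generated by
`[A, B; Bᴴ, 1]` with `A - B Bᴴ = X Xᴴ` and `A - Bᴴ B = Y Yᴴ`. If `B` is normal, a common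
eigenvector of `B` and `Bᴴ` gives a product vector. Otherwise a dimension count forces `X = x` and
`Y = y` to be single columns, so `B Bᴴ - Bᴴ B = y yᴴ - x xᴴ`; a real-structure argument for the
real and imaginary parts of `B` then yields a normal dilation `[B, α x; yᴴ, z]`, and an eigenvector
of the dilation gives the product vector.
-/

section PositiveSemidefinite

variable {m : Type*}

open scoped MatrixOrder Matrix.Norms.L2Operator in
lemma exists_pos_forall_posSemidef_one_add_smul [Finite m] [DecidableEq m]
    {T : Matrix m m ℂ} (hT : T.IsHermitian) :
    ∃ δ > 0, ∀ ε : ℝ, |ε| ≤ δ → (1 + ε • T).PosSemidef := by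
  cases nonempty_fintype m
  refine ⟨(‖T‖ + 1)⁻¹, by positivity, fun ε hε ↦ ?_⟩
  have hnorm : ‖ε • T‖ ≤ 1 := by
    rw [norm_smul, Real.norm_eq_abs]
    calc |ε| * ‖T‖ ≤ (‖T‖ + 1)⁻¹ * (‖T‖ + 1) := by gcongr; linarith
      _ = 1 := inv_mul_cancel₀ (by positivity)
  have hself : IsSelfAdjoint (ε • T) := (IsSelfAdjoint.all ε).smul hT
  rw [← nonneg_iff_posSemidef, ← neg_le_iff_add_nonneg']
  calc -(1 : Matrix m m ℂ) ≤ -algebraMap ℝ (Matrix m m ℂ) ‖ε • T‖ :=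
        neg_le_neg ((algebraMap_mono _ hnorm).trans_eq (map_one _))
    _ ≤ ε • T := hself.neg_algebraMap_norm_le_self

lemma exists_eq_mul_conjTranspose_and_left_inverse [Fintype m] {P : Matrix m m ℂ}
    (hP : P.PosSemidef) :
    ∃ (S : Matrix m (Fin P.rank) ℂ) (L : Matrix (Fin P.rank) m ℂ), P = S * Sᴴ ∧ L * S = 1 := by
  classical
  set U := (hP.1.eigenvectorUnitary : Matrix m m ℂ)
  set ev := hP.1.eigenvalues
  set root : m → ℂ := fun i ↦ (√(ev i) : ℂ)
  let e : Fin P.rank ≃ {i // ev i ≠ 0} :=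
    (finCongr hP.1.rank_eq_card_non_zero_eigs).trans (Fintype.equivFin _).symm
  let inc : Fin P.rank → m := fun k ↦ (e k).1
  have hspec : P = (U * diagonal root) * (U * diagonal root)ᴴ := by
    have hev : diagonal (RCLike.ofReal ∘ ev) = diagonal root * (diagonal root)ᴴ := by
      rw [diagonal_conjTranspose, diagonal_mul_diagonal]
      congr 1
      funext i
      simp [root, ← Complex.ofReal_mul, Real.mul_self_sqrt (hP.eigenvalues_nonneg i), ev]
    calc P = U * diagonal (RCLike.ofReal ∘ ev) * Uᴴ :=
          hP.1.spectral_theorem.trans (Unitary.conjStarAlgAut_apply _ _)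
      _ = _ := by rw [hev, conjTranspose_mul]; simp only [Matrix.mul_assoc]
  refine ⟨(U * diagonal root).submatrix id inc, (diagonal root⁻¹ * Uᴴ).submatrix inc id, ?_, ?_⟩
  · conv_lhs => rw [hspec]
    ext i j
    simp only [mul_apply (M := U * diagonal root), mul_apply (M := submatrix _ _ _),
      submatrix_apply, conjTranspose_apply, id]
    set g : m → ℂ := fun k ↦ (U * diagonal root) i k * star ((U * diagonal root) j k)
    calc ∑ k, g k = ∑ k with ev k ≠ 0, g k := by
          refine (Finset.sum_subset (Finset.filter_subset _ _) fun k _ hk ↦ ?_).symm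
          have hroot : root k = 0 := by simp [root, show ev k = 0 by simpa using hk]
          simp [g, hroot]
      _ = ∑ k : {k // ev k ≠ 0}, g k := Finset.sum_subtype _ (by simp) g
      _ = ∑ k, g (inc k) := (e.sum_comp fun k ↦ g k).symm
  · have hUU : Uᴴ * U = 1 := Unitary.coe_star_mul_self hP.1.eigenvectorUnitary
    have hinc : inc.Injective := Subtype.val_injective.comp e.injective
    have hroot_ne : ∀ k, root (inc k) ≠ 0 := fun k ↦
      Complex.ofReal_ne_zero.2 ((Real.sqrt_ne_zero (hP.eigenvalues_nonneg _)).2 (e k).2)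
    rw [← submatrix_mul _ _ _ _ _ Function.bijective_id, Matrix.mul_assoc, ← Matrix.mul_assoc Uᴴ,
      hUU, Matrix.one_mul, diagonal_mul_diagonal, submatrix_diagonal _ _ hinc, ← diagonal_one]
    exact congrArg diagonal (funext fun k ↦ inv_mul_cancel₀ (hroot_ne k))

end PositiveSemidefinite

section PartialTranspose

variable {m : Type*}

/-- The partial transpose of a matrix on `ℂ² ⊗ ℂᵐ`, written as a `2 × 2` block matrix: the two
off-diagonal blocks are exchanged, i.e. the `ℂ²` factor is transposed. -/
def partialTranspose : Matrix (m ⊕ m) (m ⊕ m) ℂ →ₗ[ℂ] Matrix (m ⊕ m) (m ⊕ m) ℂ where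
  toFun X := fromBlocks X.toBlocks₁₁ X.toBlocks₂₁ X.toBlocks₁₂ X.toBlocks₂₂
  map_add' X Y := by ext (i | i) (j | j) <;> rfl
  map_smul' c X := by ext (i | i) (j | j) <;> rfl

lemma partialTranspose_fromBlocks (A B C D : Matrix m m ℂ) :
    partialTranspose (fromBlocks A B C D) = fromBlocks A C B D := by
  simp [partialTranspose]

lemma partialTranspose_conjTranspose (X : Matrix (m ⊕ m) (m ⊕ m) ℂ) :
    partialTranspose Xᴴ = (partialTranspose X)ᴴ := by
  ext (i | i) (j | j) <;> rfl

lemma partialTranspose_one [DecidableEq m] :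
    partialTranspose (1 : Matrix (m ⊕ m) (m ⊕ m) ℂ) = 1 := by
  rw [← fromBlocks_one, partialTranspose_fromBlocks]

lemma trace_mul_partialTranspose [Fintype m] (X Y : Matrix (m ⊕ m) (m ⊕ m) ℂ) :
    (X * partialTranspose Y).trace = (partialTranspose X * Y).trace := by
  have trace_fromBlocks (A B C D : Matrix m m ℂ) :
      (fromBlocks A B C D).trace = A.trace + D.trace := by simp [trace]
  rw [← fromBlocks_toBlocks X, ← fromBlocks_toBlocks Y]
  simp only [partialTranspose_fromBlocks, fromBlocks_multiply, trace_fromBlocks, trace_add]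
  ring

/-- A matrix with positive partial transpose: both `X` and `partialTranspose X` are positive
semidefinite. -/
def IsPPT (X : Matrix (m ⊕ m) (m ⊕ m) ℂ) : Prop :=
  X.PosSemidef ∧ (partialTranspose X).PosSemidef

/-- `X` spans an extreme ray of the cone of PPT matrices. The condition is phrased by two-sided
perturbations: those which keep `X` in the cone are real multiples of `X`. -/
def IsPPTExtremal (X : Matrix (m ⊕ m) (m ⊕ m) ℂ) : Prop :=
  ∀ σ, IsPPT (X + σ) → IsPPT (X - σ) → ∃ c : ℝ, σ = c • X

/-- The product vector `(s, t) ⊗ f` of `ℂ² ⊗ ℂᵐ`. -/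
def productVector (s t : ℂ) (f : m → ℂ) : m ⊕ m → ℂ := Sum.elim (s • f) (t • f)

/-- `X` is proportional to the projection onto a nonzero product vector. -/
def IsProductRay (X : Matrix (m ⊕ m) (m ⊕ m) ℂ) : Prop :=
  ∃ (s t : ℂ) (f : m → ℂ) (c : ℝ), productVector s t f ≠ 0 ∧
    vecMulVec (productVector s t f) (star (productVector s t f)) = c • X

lemma IsPPTExtremal.exists_congruence_eq_smul [Finite m] {κ₁ κ₂ : Type*} [Fintype κ₁] [Fintype κ₂]
    {X : Matrix (m ⊕ m) (m ⊕ m) ℂ} (hX : IsPPTExtremal X)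
    {W₁ : Matrix (m ⊕ m) κ₁ ℂ} {W₂ : Matrix (m ⊕ m) κ₂ ℂ}
    (hW₁ : X = W₁ * W₁ᴴ) (hW₂ : partialTranspose X = W₂ * W₂ᴴ)
    {T₁ : Matrix κ₁ κ₁ ℂ} {T₂ : Matrix κ₂ κ₂ ℂ} (hT₁ : T₁.IsHermitian) (hT₂ : T₂.IsHermitian)
    (hT : partialTranspose (W₁ * T₁ * W₁ᴴ) = W₂ * T₂ * W₂ᴴ) :
    ∃ c : ℝ, W₁ * T₁ * W₁ᴴ = c • X := by
  classical
  obtain ⟨δ₁, hδ₁, hpos₁⟩ := exists_pos_forall_posSemidef_one_add_smul hT₁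
  obtain ⟨δ₂, hδ₂, hpos₂⟩ := exists_pos_forall_posSemidef_one_add_smul hT₂
  set δ := min δ₁ δ₂
  have hδ : 0 < δ := lt_min hδ₁ hδ₂
  have hppt : ∀ ε : ℝ, |ε| ≤ δ → IsPPT (X + ε • (W₁ * T₁ * W₁ᴴ)) := fun ε hε ↦ by
    constructor
    · convert (hpos₁ ε (hε.trans (min_le_left _ _))).mul_mul_conjTranspose_same W₁ using 1
      simp only [Matrix.mul_add, Matrix.add_mul, Matrix.mul_one, Matrix.mul_smul, Matrix.smul_mul,
        ← hW₁]
    · convert (hpos₂ ε (hε.trans (min_le_right _ _))).mul_mul_conjTranspose_same W₂ using 1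
      simp only [Matrix.mul_add, Matrix.add_mul, Matrix.mul_one, Matrix.mul_smul, Matrix.smul_mul,
        ← hW₂, ← hT, map_add, LinearMap.map_smul_of_tower]
  obtain ⟨c, hc⟩ := hX (δ • (W₁ * T₁ * W₁ᴴ)) (hppt δ (abs_of_pos hδ).le) (by
    simpa only [neg_smul, ← sub_eq_add_neg] using hppt (-δ) (by rw [abs_neg, abs_of_pos hδ]))
  exact ⟨δ⁻¹ * c, by rw [mul_smul, ← hc, inv_smul_smul₀ hδ.ne']⟩

end PartialTranspose

section TotallyReal

open Module Submodule InnerProductSpace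

variable {E : Type*} [NormedAddCommGroup E] [InnerProductSpace ℂ E]

/-- A set of vectors is totally real if the inner product of any two of them is a real number. -/
def IsTotallyReal (s : Set E) : Prop := ∀ v ∈ s, ∀ w ∈ s, (⟪v, w⟫_ℂ).im = 0

lemma IsTotallyReal.real_span {s : Set E} (hs : IsTotallyReal s) :
    IsTotallyReal (span ℝ s : Set E) := by
  intro v hv w hw
  induction hv, hw using span_induction₂ with
  | mem_mem v w hv hw => exact hs v hv w hw
  | zero_left => simp
  | zero_right => simp
  | add_left _ _ _ _ _ _ h₁ h₂ => simp [h₁, h₂]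
  | add_right _ _ _ _ _ _ h₁ h₂ => simp [h₁, h₂]
  | smul_left r _ _ _ _ h => simp [inner_smul_left_eq_star_smul, h]
  | smul_right r _ _ _ _ h => simp [inner_smul_right_eq_smul, h]

lemma im_inner_eq_zero_comm {v w : E} : (⟪v, w⟫_ℂ).im = 0 ↔ (⟪w, v⟫_ℂ).im = 0 := by
  rw [← inner_conj_symm, Complex.conj_im, neg_eq_zero]

lemma isTotallyReal_triple {u v w : E} (huv : (⟪u, v⟫_ℂ).im = 0) (huw : (⟪u, w⟫_ℂ).im = 0)
    (hvw : (⟪v, w⟫_ℂ).im = 0) : IsTotallyReal {u, v, w} := by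
  have hself (v : E) : (⟪v, v⟫_ℂ).im = 0 := inner_self_im (𝕜 := ℂ) v
  rintro _ (rfl | rfl | rfl) _ (rfl | rfl | rfl) <;>
    first | exact hself _ | assumption | (rw [im_inner_eq_zero_comm]; assumption)

lemma exists_add_I_smul_eq_of_mem_span {s : Set E} {v : E} (hv : v ∈ span ℂ s) :
    ∃ p ∈ span ℝ s, ∃ q ∈ span ℝ s, p + Complex.I • q = v := by
  induction hv using span_induction with
  | mem v hv => exact ⟨v, subset_span hv, 0, zero_mem _, by simp⟩
  | zero => exact ⟨0, zero_mem _, 0, zero_mem _, by simp⟩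
  | add v w _ _ hv hw =>
    obtain ⟨p, hp, q, hq, rfl⟩ := hv
    obtain ⟨p', hp', q', hq', rfl⟩ := hw
    exact ⟨p + p', add_mem hp hp', q + q', add_mem hq hq', by module⟩
  | smul c v _ hv =>
    obtain ⟨p, hp, q, hq, rfl⟩ := hv
    refine ⟨c.re • p - c.im • q, sub_mem (smul_mem _ _ hp) (smul_mem _ _ hq),
      c.im • p + c.re • q, add_mem (smul_mem _ _ hp) (smul_mem _ _ hq), ?_⟩
    conv_rhs => rw [← Complex.re_add_im c]
    simp only [← Complex.coe_smul]
    match_scalars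
    · ring
    · linear_combination (-(c.im : ℂ)) * Complex.I_sq

lemma IsTotallyReal.eq_zero_of_add_I_smul {s : Set E} (hs : IsTotallyReal s) {p q : E}
    (hp : p ∈ span ℝ s) (hq : q ∈ span ℝ s) (h : p + Complex.I • q = 0) : p = 0 ∧ q = 0 := by
  have hq0 : q = 0 := by
    have him := hs.real_span q hq p hp
    rw [eq_neg_of_add_eq_zero_left h, inner_neg_right, inner_smul_right, Complex.neg_im,
      Complex.I_mul_im, neg_eq_zero] at him
    exact inner_self_eq_zero.1 (Complex.ext him (inner_self_im (𝕜 := ℂ) q))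
  exact ⟨by simpa [hq0] using h, hq0⟩

lemma eq_of_forall_inner_left_eq_of_span_eq_top {s : Set E} (htop : span ℂ s = ⊤) {v w : E}
    (h : ∀ e ∈ s, ⟪e, v⟫_ℂ = ⟪e, w⟫_ℂ) : v = w :=
  ext_inner_left ℂ fun x ↦ by
    induction (htop ▸ mem_top : x ∈ span ℂ s) using span_induction with
    | mem e he => exact h e he
    | zero => simp
    | add _ _ _ _ h₁ h₂ => simp [inner_add_left, h₁, h₂]
    | smul c _ _ h => simp [inner_smul_left, h]

lemma inner_smul_eq_inner_smul_of_span_eq_top {s : Set E} (htop : span ℂ s = ⊤) {x y : E}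
    (h : ∀ e ∈ s, ∀ e' ∈ s, ⟪e, y⟫_ℂ * star ⟪e', y⟫_ℂ = ⟪e, x⟫_ℂ * star ⟪e', x⟫_ℂ) (v : E) :
    ⟪y, v⟫_ℂ • y = ⟪x, v⟫_ℂ • x := by
  induction (htop ▸ mem_top : v ∈ span ℂ s) using span_induction with
  | mem e' he' =>
    refine eq_of_forall_inner_left_eq_of_span_eq_top htop fun e he ↦ ?_
    simpa [inner_smul_right, mul_comm] using h e he e' he'
  | zero => simp
  | add _ _ _ _ h₁ h₂ => simp [add_smul, h₁, h₂]
  | smul c _ _ h => simp [mul_smul, h]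

lemma IsTotallyReal.mem_span_of_span_eq_top {s : Set E} (hs : IsTotallyReal s)
    (htop : span ℂ s = ⊤) {v : E} (hv : ∀ e ∈ s, (⟪e, v⟫_ℂ).im = 0) : v ∈ span ℝ s := by
  obtain ⟨p, hp, q, hq, rfl⟩ := exists_add_I_smul_eq_of_mem_span (htop ▸ mem_top : v ∈ span ℂ s)
  have hq_orth : ∀ e ∈ s, ⟪e, q⟫_ℂ = 0 := fun e he ↦ by
    have hep := hs.real_span e (subset_span he) p hp
    refine Complex.ext ?_ (hs.real_span e (subset_span he) q hq)
    simpa [inner_add_right, inner_smul_right, hep] using hv e he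
  have hq0 : q = 0 :=
    eq_of_forall_inner_left_eq_of_span_eq_top htop fun e he ↦ by simpa using hq_orth e he
  simpa [hq0] using hp

lemma IsTotallyReal.linearIndependent {ι : Type*} {e : ι → E} (he : IsTotallyReal (Set.range e))
    (hind : LinearIndependent ℝ e) : LinearIndependent ℂ e := by
  rw [linearIndependent_iff'] at hind ⊢
  intro s c hc
  have hmem (r : ι → ℝ) : ∑ i ∈ s, r i • e i ∈ span ℝ (Set.range e) :=
    sum_mem fun i _ ↦ smul_mem _ _ (subset_span ⟨i, rfl⟩)
  have hsplit : ∑ i ∈ s, (c i).re • e i + Complex.I • ∑ i ∈ s, (c i).im • e i = 0 := by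
    rw [← hc, Finset.smul_sum, ← Finset.sum_add_distrib]
    refine Finset.sum_congr rfl fun i _ ↦ ?_
    conv_rhs => rw [← Complex.re_add_im (c i), add_smul, mul_comm, mul_smul]
    simp only [Complex.coe_smul]
  obtain ⟨hre, him⟩ := he.eq_zero_of_add_I_smul (hmem _) (hmem _) hsplit
  exact fun i hi ↦ Complex.ext (hind s _ hre i hi) (hind s _ him i hi)

lemma IsTotallyReal.span_eq_top_or_exists_smul_add_eq_zero [FiniteDimensional ℂ E]
    (hd : finrank ℂ E ≤ 3) {u a b : E} (hu : u ≠ 0) (h : IsTotallyReal {u, a, b}) :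
    span ℂ {u, a, b} = ⊤ ∨
      ∃ α β γ : ℝ, (β ≠ 0 ∨ γ ≠ 0) ∧ α • u + β • a + γ • b = 0 := by
  have hrange : Set.range ![u, a, b] = {u, a, b} := by
    ext v
    simp only [Set.mem_range, Fin.exists_fin_succ, Fin.exists_fin_zero]
    simp [eq_comm]
  by_cases hind : LinearIndependent ℝ ![u, a, b]
  · left
    have hindC : LinearIndependent ℂ ![u, a, b] :=
      IsTotallyReal.linearIndependent (by rwa [hrange]) hind
    rw [← hrange]
    exact hindC.span_eq_top_of_card_eq_finrank'
      (le_antisymm hindC.fintype_card_le_finrank (by simpa using hd))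
  · right
    obtain ⟨g, hg, hne⟩ := Fintype.not_linearIndependent_iff.1 hind
    have hsum : g 0 • u + g 1 • a + g 2 • b = 0 := by simpa [Fin.sum_univ_three] using hg
    refine ⟨g 0, g 1, g 2, ?_, hsum⟩
    by_contra! hzero
    have hg0 : g 0 = 0 := by simpa [hzero.1, hzero.2, hu] using hsum
    obtain ⟨i, hi⟩ := hne
    fin_cases i <;> simp_all

end TotallyReal

section SymmetricPair

open Module Submodule InnerProductSpace

variable {E : Type*} [NormedAddCommGroup E] [InnerProductSpace ℂ E]

lemma im_inner_apply_self_eq_zero {S : E →ₗ[ℂ] E} (hS : S.IsSymmetric) (v : E) :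
    (⟪v, S v⟫_ℂ).im = 0 :=
  Complex.conj_eq_iff_im.1 (by rw [inner_conj_symm, hS])

lemma isTotallyReal_apply_pair {S T : E →ₗ[ℂ] E} (hS : S.IsSymmetric) (hT : T.IsSymmetric) {u : E}
    (hcomm : S (T u) = T (S u)) : IsTotallyReal {u, S u, T u} := by
  refine isTotallyReal_triple (im_inner_apply_self_eq_zero hS u)
    (im_inner_apply_self_eq_zero hT u) (Complex.conj_eq_iff_im.1 ?_)
  rw [inner_conj_symm, hT, ← hcomm, hS]

lemma isTotallyReal_apply_apply {S T : E →ₗ[ℂ] E} (hS : S.IsSymmetric) (hT : T.IsSymmetric) {u : E}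
    (hcomm : S (T u) = T (S u)) : IsTotallyReal {S u, T u, S (S u)} := by
  refine isTotallyReal_triple (isTotallyReal_apply_pair hS hT hcomm _ (by simp) _ (by simp))
    (im_inner_apply_self_eq_zero hS _) ?_
  rw [← hS, hcomm, hT]
  exact im_inner_apply_self_eq_zero hT _

lemma im_inner_apply_apply_eq_zero {S T : E →ₗ[ℂ] E} (hS : S.IsSymmetric) (hT : T.IsSymmetric)
    {u : E} (hcomm : S (T u) = T (S u)) :
    ∀ v ∈ ({S (S u), T (S u), T (T u)} : Set E), ∀ e ∈ ({u, S u, T u} : Set E),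
      (⟪e, v⟫_ℂ).im = 0 := by
  have hreal := isTotallyReal_apply_pair hS hT hcomm
  have hrealS := isTotallyReal_apply_apply hS hT hcomm
  have hrealT := isTotallyReal_apply_apply hT hS hcomm.symm
  have hTS : (⟪T u, T (S u)⟫_ℂ).im = 0 := hcomm ▸ im_inner_apply_self_eq_zero hS (T u)
  rintro _ (rfl | rfl | rfl) _ (rfl | rfl | rfl)
  · rw [← hS]
    exact hreal _ (by simp) _ (by simp)
  · exact hrealS _ (by simp) _ (by simp)
  · exact hrealS _ (by simp) _ (by simp)
  · rw [← hT]
    exact hreal _ (by simp) _ (by simp)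
  · exact im_inner_apply_self_eq_zero hT _
  · exact hTS
  · rw [← hT]
    exact hreal _ (by simp) _ (by simp)
  · exact hrealT _ (by simp) _ (by simp)
  · exact hrealT _ (by simp) _ (by simp)

lemma isTotallyReal_apply_apply_of_smul_add_eq_zero {S T : E →ₗ[ℂ] E} (hS : S.IsSymmetric)
    (hT : T.IsSymmetric) {u : E} (hcomm : S (T u) = T (S u)) {α β γ : ℝ} (hγ : γ ≠ 0)
    (hrel : α • u + β • S u + γ • T u = 0) : IsTotallyReal {S (S u), T (S u), T (T u)} := by
  set V := span ℝ {S u, T u, S (S u)}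
  have hSu : S u ∈ V := subset_span (by simp)
  have hTu : T u ∈ V := subset_span (by simp)
  have hSSu : S (S u) ∈ V := subset_span (by simp)
  have hsolve {p q r : E} (hp : p ∈ V) (hq : q ∈ V) (h : α • p + β • q + γ • r = 0) : r ∈ V := by
    rw [← V.smul_mem_iff hγ, eq_neg_of_add_eq_zero_right h]
    exact neg_mem (add_mem (V.smul_mem _ hp) (V.smul_mem _ hq))
  have hTSu : T (S u) ∈ V := hsolve hSu hSSu (by simpa [hcomm] using congrArg S hrel)
  have hTTu : T (T u) ∈ V := hsolve hTu hTSu (by simpa using congrArg T hrel)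
  rintro _ (rfl | rfl | rfl) _ (rfl | rfl | rfl) <;>
    exact (isTotallyReal_apply_apply hS hT hcomm).real_span _ ‹_› _ ‹_›

lemma isTotallyReal_apply_apply_of_finrank_le_three [FiniteDimensional ℂ E]
    (hd : finrank ℂ E ≤ 3) {S T : E →ₗ[ℂ] E} (hS : S.IsSymmetric) (hT : T.IsSymmetric) {u : E}
    (hu : u ≠ 0) (hcomm : S (T u) = T (S u)) :
    IsTotallyReal {S (S u), T (S u), T (T u)} := by
  have hreal := isTotallyReal_apply_pair hS hT hcomm
  rcases hreal.span_eq_top_or_exists_smul_add_eq_zero hd hu with htop | ⟨α, β, γ, hβ | hγ, hrel⟩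
  · have hmem v (hv : v ∈ ({S (S u), T (S u), T (T u)} : Set E)) : v ∈ span ℝ {u, S u, T u} :=
      hreal.mem_span_of_span_eq_top htop (im_inner_apply_apply_eq_zero hS hT hcomm v hv)
    exact fun v hv w hw ↦ hreal.real_span v (hmem v hv) w (hmem w hw)
  · have hswap : ({T (T u), S (T u), S (S u)} : Set E) = {S (S u), T (S u), T (T u)} := by
      rw [hcomm, Set.insert_comm, Set.pair_comm, Set.insert_comm]
    exact hswap ▸ isTotallyReal_apply_apply_of_smul_add_eq_zero hT hS hcomm.symm hβ
      (α := α) (β := γ) (by rw [← hrel]; abel)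
  · exact isTotallyReal_apply_apply_of_smul_add_eq_zero hS hT hcomm hγ hrel

lemma normSq_add_I_mul_eq_normSq_sub_I_mul {p q p' q' : ℂ}
    (hp : Complex.normSq p = Complex.normSq p') (hq : Complex.normSq q = Complex.normSq q')
    (him : (p * star q).im = -(p' * star q').im) :
    Complex.normSq (p + Complex.I * q) = Complex.normSq (p' - Complex.I * q') := by
  simp only [Complex.normSq_apply, RCLike.star_def, Complex.mul_im, Complex.conj_im,
    Complex.conj_re, Complex.add_re, Complex.add_im, Complex.sub_re, Complex.sub_im,
    Complex.mul_re, Complex.I_re, Complex.I_im] at *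
  linarith

lemma im_mul_star_eq_or_eq_neg {p q p' q' : ℂ}
    (hp : Complex.normSq p = Complex.normSq p') (hq : Complex.normSq q = Complex.normSq q')
    (hre : (p * star q).re = (p' * star q').re) :
    (p * star q).im = (p' * star q').im ∨ (p * star q).im = -(p' * star q').im := by
  refine sq_eq_sq_iff_eq_or_eq_neg.1 ?_
  have hnorm : Complex.normSq (p * star q) = Complex.normSq (p' * star q') := by
    simp [Complex.normSq_mul, hp, hq]
  rw [Complex.normSq_apply, Complex.normSq_apply, hre] at hnorm
  linarith

lemma re_inner_mul_star_inner_eq_of_commutator_eq {S T : E →ₗ[ℂ] E} (hS : S.IsSymmetric)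
    (hT : T.IsSymmetric) {x y : E}
    (hST : ∀ v, S (T v) - T (S v) = (Complex.I / 2) • (⟪y, v⟫_ℂ • y - ⟪x, v⟫_ℂ • x)) {p q : E}
    (h₁ : (⟪S p, T q⟫_ℂ).im = 0) (h₂ : (⟪T p, S q⟫_ℂ).im = 0) :
    (⟪p, y⟫_ℂ * star ⟪q, y⟫_ℂ).re = (⟪p, x⟫_ℂ * star ⟪q, x⟫_ℂ).re := by
  have h : ⟪S p, T q⟫_ℂ - ⟪T p, S q⟫_ℂ =
      Complex.I / 2 * (⟪p, y⟫_ℂ * star ⟪q, y⟫_ℂ - ⟪p, x⟫_ℂ * star ⟪q, x⟫_ℂ) := by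
    rw [hS, hT, ← inner_sub_right, hST]
    simp [inner_smul_right, inner_sub_right, mul_comm]
  have him := congrArg Complex.im h
  rw [Complex.sub_im, h₁, h₂, div_mul_eq_mul_div, Complex.div_ofNat_im, Complex.I_mul_im,
    Complex.sub_re] at him
  linarith

lemma mul_star_self_eq_normSq (z : ℂ) : z * star z = Complex.normSq z := Complex.mul_conj z

lemma im_mul_star_eq_zero_of_ofReal_mul_add_eq_zero {β γ : ℝ} (hβγ : β ≠ 0 ∨ γ ≠ 0) {p q : ℂ}
    (h : β * p + γ * q = 0) : (p * star q).im = 0 := by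
  obtain ⟨hre, him⟩ := Complex.ext_iff.1 h
  simp only [Complex.add_re, Complex.add_im, Complex.re_ofReal_mul, Complex.im_ofReal_mul,
    Complex.zero_re, Complex.zero_im] at hre him
  have hβ : β * (p * star q).im = 0 := by
    simp only [Complex.mul_im, RCLike.star_def, Complex.conj_re, Complex.conj_im]
    linear_combination q.re * him - q.im * hre
  have hγ : γ * (p * star q).im = 0 := by
    simp only [Complex.mul_im, RCLike.star_def, Complex.conj_re, Complex.conj_im]
    linear_combination p.im * hre - p.re * him
  exact hβγ.elim (mul_eq_zero.1 hβ).resolve_left (mul_eq_zero.1 hγ).resolve_left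

lemma im_inner_mul_star_inner_eq_zero [FiniteDimensional ℂ E] (hd : finrank ℂ E ≤ 3)
    {x y u a b : E} (hu : u ≠ 0) (hreal : IsTotallyReal {u, a, b})
    (hne : ∃ v, ⟪y, v⟫_ℂ • y ≠ ⟪x, v⟫_ℂ • x) (hux : ⟪u, x⟫_ℂ = 0) (huy : ⟪u, y⟫_ℂ = 0)
    (ha : Complex.normSq ⟪a, y⟫_ℂ = Complex.normSq ⟪a, x⟫_ℂ)
    (hb : Complex.normSq ⟪b, y⟫_ℂ = Complex.normSq ⟪b, x⟫_ℂ)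
    (hab : ⟪a, y⟫_ℂ * star ⟪b, y⟫_ℂ = ⟪a, x⟫_ℂ * star ⟪b, x⟫_ℂ) :
    (⟪a, y⟫_ℂ * star ⟪b, y⟫_ℂ).im = 0 := by
  rcases hreal.span_eq_top_or_exists_smul_add_eq_zero hd hu with htop | ⟨α, β, γ, hβγ, hrel⟩
  · obtain ⟨v, hv⟩ := hne
    refine absurd (inner_smul_eq_inner_smul_of_span_eq_top htop ?_ v) hv
    have hba : ⟪b, y⟫_ℂ * star ⟪a, y⟫_ℂ = ⟪b, x⟫_ℂ * star ⟪a, x⟫_ℂ := by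
      simpa only [star_mul, star_star] using congrArg star hab
    rintro e (rfl | rfl | rfl) e' (rfl | rfl | rfl) <;>
      simp only [hux, huy, zero_mul, mul_zero, star_zero, mul_star_self_eq_normSq, ha, hb, hab, hba]
  · refine im_mul_star_eq_zero_of_ofReal_mul_add_eq_zero hβγ ?_
    simpa [inner_add_left, huy] using congrArg (⟪·, y⟫_ℂ) hrel

/- Since `[S, T] u = 0`, the vectors `u, S u, T u` have real Gram matrix. In dimension at most three
they determine a real structure for which the relevant matrix elements of `[S, T]` are real. -/
lemma normSq_inner_eq_of_commutator_eq [FiniteDimensional ℂ E] (hd : finrank ℂ E ≤ 3)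
    {S T : E →ₗ[ℂ] E} (hS : S.IsSymmetric) (hT : T.IsSymmetric) {x y u : E}
    (hST : ∀ v, S (T v) - T (S v) = (Complex.I / 2) • (⟪y, v⟫_ℂ • y - ⟪x, v⟫_ℂ • x))
    (hne : ∃ v, ⟪y, v⟫_ℂ • y ≠ ⟪x, v⟫_ℂ • x) (hux : ⟪u, x⟫_ℂ = 0) (huy : ⟪u, y⟫_ℂ = 0) :
    Complex.normSq (⟪S u, y⟫_ℂ + Complex.I * ⟪T u, y⟫_ℂ) =
      Complex.normSq (⟪S u, x⟫_ℂ - Complex.I * ⟪T u, x⟫_ℂ) := by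
  rcases eq_or_ne u 0 with rfl | hu
  · simp
  have hcomm : S (T u) = T (S u) := by
    simpa [inner_eq_zero_symm.1 hux, inner_eq_zero_symm.1 huy, sub_eq_zero] using hST u
  have hreal := isTotallyReal_apply_apply_of_finrank_le_three hd hS hT hu hcomm
  have hnorm {p : E} (h : (⟪S p, T p⟫_ℂ).im = 0) :
      Complex.normSq ⟪p, y⟫_ℂ = Complex.normSq ⟪p, x⟫_ℂ := by
    simpa only [mul_star_self_eq_normSq, Complex.ofReal_re] using
      re_inner_mul_star_inner_eq_of_commutator_eq hS hT hST h (im_inner_eq_zero_comm.1 h)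
  have ha := hnorm (hreal (S (S u)) (by simp) (T (S u)) (by simp))
  have hb := hnorm (hcomm ▸ hreal (T (S u)) (by simp) (T (T u)) (by simp))
  have hab := re_inner_mul_star_inner_eq_of_commutator_eq hS hT hST
    (hreal (S (S u)) (by simp) (T (T u)) (by simp))
    (hcomm ▸ hreal (T (S u)) (by simp) (T (S u)) (by simp))
  refine normSq_add_I_mul_eq_normSq_sub_I_mul ha hb ?_
  rcases im_mul_star_eq_or_eq_neg ha hb hab with him | him
  · have hzero := im_inner_mul_star_inner_eq_zero hd hu (isTotallyReal_apply_pair hS hT hcomm) hne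
      hux huy ha hb (Complex.ext hab him)
    rw [← him, hzero, neg_zero]
  · exact him

end SymmetricPair

section RankTwoCommutator

open Module Submodule ComplexStarModule InnerProductSpace

lemma realPart_sub_I_smul_imaginaryPart {A : Type*} [AddCommGroup A] [Module ℂ A] [StarAddMonoid A]
    [StarModule ℂ A] (a : A) : (ℜ a : A) - Complex.I • (ℑ a : A) = star a := by
  conv_rhs => rw [← realPart_add_I_smul_imaginaryPart a]
  simp [sub_eq_add_neg]

lemma realPart_mul_imaginaryPart_sub_imaginaryPart_mul_realPart {A : Type*} [Ring A] [StarRing A]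
    [Algebra ℂ A] [StarModule ℂ A] (a : A) :
    (ℜ a * ℑ a - ℑ a * ℜ a : A) = (Complex.I / 2) • (a * star a - star a * a) := by
  simp only [realPart_apply_coe, imaginaryPart_apply_coe, mul_add, mul_sub, add_mul, sub_mul,
    smul_mul_assoc, mul_smul_comm]
  module

variable {E : Type*} [NormedAddCommGroup E] [InnerProductSpace ℂ E]

lemma norm_inner_apply_eq_norm_inner_adjoint_apply [FiniteDimensional ℂ E] (hd : finrank ℂ E ≤ 3)
    {B : E →ₗ[ℂ] E} {x y u : E}
    (hB : ∀ v, B (B.adjoint v) - B.adjoint (B v) = ⟪y, v⟫_ℂ • y - ⟪x, v⟫_ℂ • x)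
    (hne : ∃ v, ⟪y, v⟫_ℂ • y ≠ ⟪x, v⟫_ℂ • x) (hux : ⟪u, x⟫_ℂ = 0) (huy : ⟪u, y⟫_ℂ = 0) :
    ‖⟪u, B y⟫_ℂ‖ = ‖⟪u, B.adjoint x⟫_ℂ‖ := by
  set S : E →ₗ[ℂ] E := (ℜ B : E →ₗ[ℂ] E)
  set T : E →ₗ[ℂ] E := (ℑ B : E →ₗ[ℂ] E)
  have hS : S.IsSymmetric := LinearMap.isSymmetric_iff_isSelfAdjoint _ |>.2 (ℜ B).2
  have hT : T.IsSymmetric := LinearMap.isSymmetric_iff_isSelfAdjoint _ |>.2 (ℑ B).2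
  have hBy : B y = S y + Complex.I • T y :=
    LinearMap.congr_fun (realPart_add_I_smul_imaginaryPart B).symm y
  have hBx : B.adjoint x = S x - Complex.I • T x :=
    LinearMap.congr_fun (realPart_sub_I_smul_imaginaryPart B).symm x
  have hST (v : E) : S (T v) - T (S v) = (Complex.I / 2) • (⟪y, v⟫_ℂ • y - ⟪x, v⟫_ℂ • x) := by
    rw [← hB v]
    exact LinearMap.congr_fun (realPart_mul_imaginaryPart_sub_imaginaryPart_mul_realPart B) v
  have hnormSq := normSq_inner_eq_of_commutator_eq hd hS hT hST hne hux huy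
  rw [hS u y, hT u y, hS u x, hT u x, Complex.normSq_eq_norm_sq, Complex.normSq_eq_norm_sq]
    at hnormSq
  rw [hBy, hBx, inner_add_right, inner_sub_right, inner_smul_right, inner_smul_right]
  exact (sq_eq_sq₀ (norm_nonneg _) (norm_nonneg _)).1 hnormSq

lemma exists_norm_eq_one_and_eq_mul {p q : ℂ} (h : ‖p‖ = ‖q‖) : ∃ α : ℂ, ‖α‖ = 1 ∧ p = α * q := by
  rcases eq_or_ne q 0 with rfl | hq
  · exact ⟨1, norm_one, by simpa using h⟩
  · have hnorm : ‖p / q‖ = 1 := by rw [norm_div, h, div_self (norm_ne_zero_iff.2 hq)]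
    exact ⟨p / q, hnorm, (div_mul_cancel₀ p hq).symm⟩

lemma linearIndependent_pair_of_norm_eq {x y : E} (hxy : ‖x‖ = ‖y‖)
    (hne : ∃ v, ⟪y, v⟫_ℂ • y ≠ ⟪x, v⟫_ℂ • x) : LinearIndependent ℂ ![x, y] := by
  obtain ⟨v, hv⟩ := hne
  have hx : x ≠ 0 := by
    rintro rfl
    obtain rfl : y = 0 := by simpa using hxy.symm
    exact hv rfl
  refine (LinearIndependent.pair_iff' hx).2 fun a ha ↦ hv ?_
  subst ha
  have ha : ‖a‖ = 1 := by
    rw [norm_smul] at hxy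
    exact (mul_eq_right₀ (norm_ne_zero_iff.2 hx)).1 hxy.symm
  rw [inner_smul_left, smul_smul, mul_right_comm, Complex.conj_mul', ha, Complex.ofReal_one,
    one_pow, one_mul]

lemma exists_eq_smul_sub_conj_smul {x y w : E} (hli : LinearIndependent ℂ ![x, y])
    (hxy : ‖x‖ = ‖y‖) (hw : w ∈ span ℂ {x, y}) (hre : ⟪y, w⟫_ℂ + ⟪w, x⟫_ℂ = 0) :
    ∃ z : ℂ, w = z • y - star z • x := by
  obtain ⟨q, p, rfl⟩ := mem_span_pair.1 hw
  suffices hδ : q + star p = 0 from ⟨p, by rw [eq_neg_of_add_eq_zero_left hδ]; module⟩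
  by_contra hδ
  have heq : (q + star p) * ⟪y, x⟫_ℂ = -(star (q + star p) * (‖y‖ ^ 2 : ℝ)) := by
    simp only [inner_add_left, inner_add_right, inner_smul_left, inner_smul_right,
      inner_self_eq_norm_sq_to_K, hxy] at hre
    simp only [RCLike.star_def, map_add, Complex.conj_conj]
    push_cast
    linear_combination hre
  have hnorm : ‖⟪y, x⟫_ℂ‖ = ‖y‖ * ‖x‖ := by
    have := congrArg norm heq
    rw [norm_mul, norm_neg, norm_mul, norm_star] at this
    simpa [hxy, sq] using mul_left_cancel₀ (norm_ne_zero_iff.2 hδ) this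
  obtain ⟨c, hc, hcx⟩ := (norm_inner_eq_norm_iff (hli.ne_zero 1) (hli.ne_zero 0)).1 hnorm
  exact (LinearIndependent.pair_iff' (hli.ne_zero 0)).1 hli c⁻¹ (by simp [hcx, hc])

lemma exists_apply_sub_adjoint_apply_eq [FiniteDimensional ℂ E] (hd : finrank ℂ E ≤ 3)
    {B : E →ₗ[ℂ] E} {x y : E}
    (hB : ∀ v, B (B.adjoint v) - B.adjoint (B v) = ⟪y, v⟫_ℂ • y - ⟪x, v⟫_ℂ • x)
    (hne : ∃ v, ⟪y, v⟫_ℂ • y ≠ ⟪x, v⟫_ℂ • x) (hxy : ‖x‖ = ‖y‖) (hBxy : ⟪y, B y⟫_ℂ = ⟪x, B x⟫_ℂ) :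
    ∃ α z : ℂ, ‖α‖ = 1 ∧ B y - B.adjoint (α • x) = z • y - star z • α • x := by
  have hli := linearIndependent_pair_of_norm_eq hxy hne
  have hfin : finrank ℂ (span ℂ {x, y})ᗮ ≤ 1 := by
    have hadd := (span ℂ {x, y}).finrank_add_finrank_orthogonal
    have hspan : finrank ℂ (span ℂ {x, y}) = 2 := by
      rw [← Matrix.range_cons_cons_empty x y ![], finrank_span_eq_card hli, Fintype.card_fin]
    omega
  obtain ⟨u, hu⟩ := finrank_le_one_iff.1 hfin
  have hux : ⟪(u : E), x⟫_ℂ = 0 := inner_left_of_mem_orthogonal (subset_span (by simp)) u.2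
  have huy : ⟪(u : E), y⟫_ℂ = 0 := inner_left_of_mem_orthogonal (subset_span (by simp)) u.2
  obtain ⟨α, hα, hαu⟩ := exists_norm_eq_one_and_eq_mul
    (norm_inner_apply_eq_norm_inner_adjoint_apply hd hB hne hux huy)
  have hα0 : α ≠ 0 := norm_ne_zero_iff.1 (hα ▸ one_ne_zero)
  have hspan : span ℂ {α • x, y} = span ℂ {x, y} := by
    rw [span_insert, span_insert, span_singleton_smul_eq hα0.isUnit]
  have hmem : B y - B.adjoint (α • x) ∈ span ℂ {α • x, y} := by
    rw [hspan, ← orthogonal_orthogonal (span ℂ {x, y}), mem_orthogonal]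
    intro v hv
    obtain ⟨c, hc⟩ := hu ⟨v, hv⟩
    obtain rfl : c • (u : E) = v := congrArg Subtype.val hc
    rw [inner_smul_left, inner_sub_right, map_smul, inner_smul_right, ← hαu, sub_self, mul_zero]
  have hBα : ⟪α • x, B (α • x)⟫_ℂ = ⟪x, B x⟫_ℂ := by
    rw [map_smul, inner_smul_left, inner_smul_right, ← mul_assoc, Complex.conj_mul', hα]
    simp
  have hre : ⟪y, B y - B.adjoint (α • x)⟫_ℂ + ⟪B y - B.adjoint (α • x), α • x⟫_ℂ = 0 := by
    rw [inner_sub_left, inner_sub_right, LinearMap.adjoint_inner_left,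
      LinearMap.adjoint_inner_right, hBα, hBxy]
    ring
  have hli' : LinearIndependent ℂ ![α • x, y] := by
    have hx : x ≠ 0 := hli.ne_zero 0
    exact (LinearIndependent.pair_iff' (smul_ne_zero hα0 hx)).2 fun a ↦ by
      simpa only [smul_smul] using (LinearIndependent.pair_iff' hx).1 hli (a * α)
  obtain ⟨z, hz⟩ := exists_eq_smul_sub_conj_smul hli' (by rw [norm_smul, hα, one_mul, hxy]) hmem hre
  exact ⟨α, z, hα, hz⟩

end RankTwoCommutator

section NormalDilation

variable {m : Type*}

lemma exists_mulVec_eq_smul_of_normal [Fintype m] [Nonempty m] {N : Matrix m m ℂ}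
    (hN : N * Nᴴ = Nᴴ * N) :
    ∃ (v : m → ℂ) (z : ℂ), v ≠ 0 ∧ N *ᵥ v = z • v ∧ Nᴴ *ᵥ v = star z • v := by
  classical
  obtain ⟨z, hz⟩ := Module.End.exists_eigenvalue (toLin' N)
  obtain ⟨v, hv⟩ := hz.exists_hasEigenvector
  have hNv : N *ᵥ v = z • v := by simpa using hv.apply_eq_smul
  refine ⟨v, z, hv.2, hNv, ?_⟩
  have hshift : (N - z • 1) * (N - z • 1)ᴴ = (N - z • 1)ᴴ * (N - z • 1) := by
    simp only [conjTranspose_sub, conjTranspose_smul, conjTranspose_one, Matrix.sub_mul,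
      Matrix.mul_sub, Matrix.smul_mul, Matrix.mul_smul, Matrix.one_mul, Matrix.mul_one, hN]
    module
  have hker : (N - z • 1)ᴴ *ᵥ v = 0 := by
    rw [← self_mul_conjTranspose_mulVec_eq_zero, hshift, ← mulVec_mulVec, sub_mulVec, hNv,
      smul_mulVec, one_mulVec, sub_self, mulVec_zero]
  rwa [conjTranspose_sub, conjTranspose_smul, conjTranspose_one, sub_mulVec, smul_mulVec,
    one_mulVec, sub_eq_zero] at hker

lemma fromBlocks_mul_conjTranspose_self_comm {κ : Type*} [Fintype m] [Fintype κ] {B : Matrix m m ℂ}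
    {X Y : Matrix m κ ℂ} {Z : Matrix κ κ ℂ} (hXY : B * Bᴴ + X * Xᴴ = Bᴴ * B + Y * Yᴴ)
    (hZ : B * Y + X * Zᴴ = Bᴴ * X + Y * Z) (hκ : Yᴴ * Y + Z * Zᴴ = Xᴴ * X + Zᴴ * Z) :
    fromBlocks B X Yᴴ Z * (fromBlocks B X Yᴴ Z)ᴴ =
      (fromBlocks B X Yᴴ Z)ᴴ * fromBlocks B X Yᴴ Z := by
  have hZ' : Yᴴ * Bᴴ + Z * Xᴴ = Xᴴ * B + Zᴴ * Yᴴ := by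
    simpa only [conjTranspose_add, conjTranspose_mul, conjTranspose_conjTranspose]
      using congrArg conjTranspose hZ
  simp only [fromBlocks_conjTranspose, fromBlocks_multiply, conjTranspose_conjTranspose, hXY, hZ,
    hκ, hZ']

lemma vecMulVec_star_mulVec [Fintype m] (u v : m → ℂ) :
    vecMulVec u (star u) *ᵥ v = inner ℂ (WithLp.toLp 2 u) (WithLp.toLp 2 v) • u := by
  rw [vecMulVec_mulVec, op_smul_eq_smul, EuclideanSpace.inner_toLp_toLp, dotProduct_comm]

lemma dotProduct_star_self_eq_of_commutator_eq [Fintype m] {B : Matrix m m ℂ} {x y : m → ℂ}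
    (hB : B * Bᴴ - Bᴴ * B = vecMulVec y (star y) - vecMulVec x (star x)) :
    x ⬝ᵥ star x = y ⬝ᵥ star y := by
  have htrace := congrArg trace hB
  rw [trace_sub, trace_sub, trace_mul_comm, sub_self, trace_vecMulVec, trace_vecMulVec] at htrace
  exact (sub_eq_zero.1 htrace.symm).symm

lemma exists_mulVec_sub_conjTranspose_mulVec_eq [Fintype m] (hm : Fintype.card m ≤ 3)
    {B : Matrix m m ℂ} {x y : m → ℂ}
    (hB : B * Bᴴ - Bᴴ * B = vecMulVec y (star y) - vecMulVec x (star x))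
    (hne : vecMulVec y (star y) ≠ vecMulVec x (star x)) :
    ∃ α z : ℂ, ‖α‖ = 1 ∧ B *ᵥ y - Bᴴ *ᵥ (α • x) = z • y - star z • α • x := by
  classical
  have hxy := dotProduct_star_self_eq_of_commutator_eq hB
  have hBxy : (B *ᵥ y) ⬝ᵥ star y = (B *ᵥ x) ⬝ᵥ star x := by
    have htrace := congrArg (fun K ↦ trace (B * K)) hB
    simp only [Matrix.mul_sub, trace_sub, mul_vecMulVec, trace_vecMulVec] at htrace
    rw [← Matrix.mul_assoc B Bᴴ B, trace_mul_comm (B * Bᴴ) B, sub_self] at htrace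
    exact sub_eq_zero.1 htrace.symm
  have hnorm : ‖WithLp.toLp 2 x‖ = ‖WithLp.toLp 2 y‖ := by
    rw [@norm_eq_sqrt_re_inner ℂ, @norm_eq_sqrt_re_inner ℂ, EuclideanSpace.inner_toLp_toLp,
      EuclideanSpace.inner_toLp_toLp, hxy]
  obtain ⟨α, z, hα, hz⟩ := exists_apply_sub_adjoint_apply_eq (E := EuclideanSpace ℂ m)
    (B := toEuclideanLin B) (by simpa using hm) (fun v ↦ by
      rw [← toEuclideanLin_conjTranspose_eq_adjoint]
      apply WithLp.ofLp_injective 2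
      simpa [sub_mulVec, vecMulVec_star_mulVec, ← mulVec_mulVec] using congrArg (· *ᵥ v.ofLp) hB)
    (by
      by_contra! h
      refine hne (Matrix.ext_of_mulVec_single fun j ↦ ?_)
      rw [vecMulVec_star_mulVec, vecMulVec_star_mulVec]
      exact congrArg WithLp.ofLp (h (WithLp.toLp 2 (Pi.single j 1))))
    hnorm (by simpa [EuclideanSpace.inner_toLp_toLp] using hBxy)
  rw [← toEuclideanLin_conjTranspose_eq_adjoint] at hz
  exact ⟨α, z, hα, congrArg WithLp.ofLp hz⟩

/-- The dilation `[B, x; yᴴ, z]` of `B` by one extra dimension, which absorbs the defect of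
normality `B Bᴴ - Bᴴ B = y yᴴ - x xᴴ`. -/
def borderedMatrix (B : Matrix m m ℂ) (x y : m → ℂ) (z : ℂ) : Matrix (m ⊕ Unit) (m ⊕ Unit) ℂ :=
  fromBlocks B (replicateCol Unit x) (replicateCol Unit y)ᴴ (diagonal fun _ ↦ z)

lemma borderedMatrix_mulVec [Fintype m] (B : Matrix m m ℂ) (x y : m → ℂ) (z : ℂ)
    (v : m ⊕ Unit → ℂ) (i : m) :
    (borderedMatrix B x y z *ᵥ v) (Sum.inl i) = (B *ᵥ (v ∘ Sum.inl) + v (Sum.inr ()) • x) i := by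
  simp [borderedMatrix, mulVec, dotProduct, mul_comm]

lemma conjTranspose_borderedMatrix (B : Matrix m m ℂ) (x y : m → ℂ) (z : ℂ) :
    (borderedMatrix B x y z)ᴴ = borderedMatrix Bᴴ y x (star z) := by
  simp only [borderedMatrix, fromBlocks_conjTranspose, conjTranspose_conjTranspose,
    diagonal_conjTranspose]
  rfl

lemma exists_borderedMatrix_normal [Fintype m] (hm : Fintype.card m ≤ 3)
    {B : Matrix m m ℂ} {x y : m → ℂ}
    (hB : B * Bᴴ - Bᴴ * B = vecMulVec y (star y) - vecMulVec x (star x))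
    (hne : vecMulVec y (star y) ≠ vecMulVec x (star x)) :
    ∃ α z : ℂ, borderedMatrix B (α • x) y z * (borderedMatrix B (α • x) y z)ᴴ =
      (borderedMatrix B (α • x) y z)ᴴ * borderedMatrix B (α • x) y z := by
  obtain ⟨α, z, hα, hz⟩ := exists_mulVec_sub_conjTranspose_mulVec_eq hm hB hne
  have hαα : α * star α = 1 := by
    rw [RCLike.star_def, Complex.mul_conj', hα, Complex.ofReal_one, one_pow]
  refine ⟨α, z, fromBlocks_mul_conjTranspose_self_comm ?_ ?_ ?_⟩
  · rw [conjTranspose_replicateCol, conjTranspose_replicateCol, ← vecMulVec_eq, ← vecMulVec_eq,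
      star_smul, smul_vecMulVec, vecMulVec_smul, smul_smul, hαα, one_smul]
    exact (sub_eq_sub_iff_add_eq_add.1 hB).trans (add_comm _ _)
  · ext i j
    have hzi := congrFun hz i
    simp only [Pi.sub_apply, Pi.smul_apply, smul_eq_mul] at hzi
    rw [← replicateCol_mulVec, ← replicateCol_mulVec, diagonal_conjTranspose]
    simp only [Matrix.add_apply, replicateCol_apply, mul_diagonal, Pi.star_apply, Pi.smul_apply,
      smul_eq_mul]
    linear_combination hzi
  · have hxy : y ⬝ᵥ star y = (α • x) ⬝ᵥ star (α • x) := by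
      rw [star_smul, smul_dotProduct, dotProduct_smul, smul_smul, hαα, one_smul,
        dotProduct_star_self_eq_of_commutator_eq hB]
    rw [conjTranspose_replicateCol, conjTranspose_replicateCol,
      replicateRow_mul_replicateCol, replicateRow_mul_replicateCol, dotProduct_comm, hxy,
      dotProduct_comm, diagonal_conjTranspose, diagonal_mul_diagonal', diagonal_mul_diagonal']
    simp [mul_comm]

lemma exists_mulVec_add_smul_eq_smul [Fintype m] (hm : Fintype.card m ≤ 3)
    {B : Matrix m m ℂ} {x y : m → ℂ}
    (hB : B * Bᴴ - Bᴴ * B = vecMulVec y (star y) - vecMulVec x (star x))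
    (hne : vecMulVec y (star y) ≠ vecMulVec x (star x)) :
    ∃ (f : m → ℂ) (z s t : ℂ), f ≠ 0 ∧ B *ᵥ f + s • x = z • f ∧ Bᴴ *ᵥ f + t • y = star z • f := by
  obtain ⟨α, w, hN⟩ := exists_borderedMatrix_normal hm hB hne
  obtain ⟨v, z, hv, hNv, hNv'⟩ := exists_mulVec_eq_smul_of_normal hN
  rw [conjTranspose_borderedMatrix] at hNv'
  have hBf : B *ᵥ (v ∘ Sum.inl) + (v (Sum.inr ()) * α) • x = z • (v ∘ Sum.inl) := funext fun i ↦ by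
    rw [mul_smul, ← borderedMatrix_mulVec, hNv]
    rfl
  have hBf' : Bᴴ *ᵥ (v ∘ Sum.inl) + v (Sum.inr ()) • y = star z • (v ∘ Sum.inl) :=
    funext fun i ↦ by
      rw [← borderedMatrix_mulVec, hNv']
      rfl
  refine ⟨v ∘ Sum.inl, z, v (Sum.inr ()) * α, v (Sum.inr ()), fun hf ↦ ?_, hBf, hBf'⟩
  have hs : v (Sum.inr ()) ≠ 0 := fun hs ↦ hv (funext (Sum.rec (congrFun hf) fun _ ↦ hs))
  have hy : y = 0 := by
    rw [hf, mulVec_zero, smul_zero, zero_add] at hBf'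
    exact (smul_eq_zero.1 hBf').resolve_left hs
  have hx : x = 0 := by
    rw [← dotProduct_self_star_eq_zero, dotProduct_star_self_eq_of_commutator_eq hB, hy,
      zero_dotProduct]
  exact hne (by rw [hx, hy])

end NormalDilation

section ExtremalRays

variable {m κ ι : Type*}

lemma eq_bot_of_forall_isSelfAdjoint_eq_zero {A : Type*} [AddCommGroup A] [Module ℂ A]
    [StarAddMonoid A] [StarModule ℂ A] {K : Submodule ℂ A} (hstar : ∀ a ∈ K, star a ∈ K)
    (hzero : ∀ a ∈ K, IsSelfAdjoint a → a = 0) : K = ⊥ := by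
  refine (Submodule.eq_bot_iff K).2 fun a ha ↦ ?_
  have hre : (realPart a : A) = 0 := by
    refine hzero _ ?_ (realPart a).2
    rw [realPart_apply_coe]
    exact K.smul_of_tower_mem _ (add_mem ha (hstar a ha))
  have him : (imaginaryPart a : A) = 0 := by
    refine hzero _ ?_ (imaginaryPart a).2
    rw [imaginaryPart_apply_coe]
    exact K.smul_mem _ (K.smul_of_tower_mem _ (sub_mem ha (hstar a ha)))
  rw [← realPart_add_I_smul_imaginaryPart a, hre, him, smul_zero, add_zero]

lemma mul_vecMulVec_star_mul_conjTranspose [Fintype κ] (W : Matrix m κ ℂ) (v : κ → ℂ) :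
    W * vecMulVec v (star v) * Wᴴ = vecMulVec (W *ᵥ v) (star (W *ᵥ v)) := by
  rw [mul_vecMulVec, vecMulVec_mul, star_mulVec]

lemma partialTranspose_vecMulVec_productVector (s t : ℂ) (f : m → ℂ) :
    partialTranspose (vecMulVec (productVector s t f) (star (productVector s t f))) =
      vecMulVec (productVector (star s) (star t) f) (star (productVector (star s) (star t) f)) := by
  ext (i | i) (j | j) <;>
    simp [partialTranspose, vecMulVec_apply, productVector, toBlocks₁₁, toBlocks₁₂, toBlocks₂₁,
      toBlocks₂₂] <;> ring

lemma eq_zero_of_mul_mul_conjTranspose_eq_zero [Fintype m] [Fintype κ] [DecidableEq κ]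
    {W : Matrix m κ ℂ} {L : Matrix κ m ℂ} (hL : L * W = 1) {T : Matrix κ κ ℂ}
    (hT : W * T * Wᴴ = 0) : T = 0 := by
  have hL' : Wᴴ * Lᴴ = 1 := by rw [← conjTranspose_mul, hL, conjTranspose_one]
  calc T = L * W * T * (Wᴴ * Lᴴ) := by rw [hL, hL', Matrix.one_mul, Matrix.mul_one]
    _ = L * (W * T * Wᴴ) * Lᴴ := by simp only [Matrix.mul_assoc]
    _ = 0 := by rw [hT, Matrix.mul_zero, Matrix.zero_mul]

/-- The map `T ↦ W T Wᴴ`. -/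
def congruence [Fintype κ] (W : Matrix m κ ℂ) : Matrix κ κ ℂ →ₗ[ℂ] Matrix m m ℂ :=
  mulRightLinearMap m ℂ Wᴴ ∘ₗ mulLeftLinearMap κ ℂ W

namespace IsPPTExtremal

variable {X : Matrix (m ⊕ m) (m ⊕ m) ℂ}

lemma isProductRay_of_mulVec_eq [Finite m] [Fintype κ] [Fintype ι] (hX : IsPPTExtremal X)
    {W₁ : Matrix (m ⊕ m) κ ℂ} {W₂ : Matrix (m ⊕ m) ι ℂ}
    (hW₁ : X = W₁ * W₁ᴴ) (hW₂ : partialTranspose X = W₂ * W₂ᴴ)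
    {v₁ : κ → ℂ} {v₂ : ι → ℂ} {s t : ℂ} {f : m → ℂ} (hv₁ : W₁ *ᵥ v₁ = productVector s t f)
    (hv₂ : W₂ *ᵥ v₂ = productVector (star s) (star t) f) (hne : productVector s t f ≠ 0) :
    IsProductRay X := by
  obtain ⟨c, hc⟩ := hX.exists_congruence_eq_smul hW₁ hW₂ (posSemidef_vecMulVec_self_star v₁).1
    (posSemidef_vecMulVec_self_star v₂).1 (by
      simp only [mul_vecMulVec_star_mul_conjTranspose, hv₁, hv₂,
        partialTranspose_vecMulVec_productVector])
  rw [mul_vecMulVec_star_mul_conjTranspose, hv₁] at hc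
  exact ⟨s, t, f, c, hne, hc⟩

/- If the bound failed, there would be Hermitian `T₁`, `T₂`, not both zero, for which `W₁ T₁ W₁ᴴ`
has trace zero and partial transpose `W₂ T₂ W₂ᴴ`. It would then be a multiple of `X`, hence zero. -/
lemma card_sq_add_card_sq_le [Fintype m] [Fintype κ] [Fintype ι] [DecidableEq κ] [DecidableEq ι]
    (hX : IsPPTExtremal X) (htrace : X.trace ≠ 0)
    {W₁ : Matrix (m ⊕ m) κ ℂ} {W₂ : Matrix (m ⊕ m) ι ℂ}
    {L₁ : Matrix κ (m ⊕ m) ℂ} {L₂ : Matrix ι (m ⊕ m) ℂ} (hL₁ : L₁ * W₁ = 1) (hL₂ : L₂ * W₂ = 1)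
    (hW₁ : X = W₁ * W₁ᴴ) (hW₂ : partialTranspose X = W₂ * W₂ᴴ) :
    Fintype.card κ ^ 2 + Fintype.card ι ^ 2 ≤ 4 * Fintype.card m ^ 2 + 1 := by
  let Φ : Matrix κ κ ℂ × Matrix ι ι ℂ →ₗ[ℂ] Matrix (m ⊕ m) (m ⊕ m) ℂ × ℂ :=
    ((partialTranspose ∘ₗ congruence W₁).coprod (-congruence W₂)).prod
      (traceLinearMap _ ℂ ℂ ∘ₗ congruence W₁ ∘ₗ LinearMap.fst ℂ _ _)
  have hker (T) : T ∈ LinearMap.ker Φ ↔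
      partialTranspose (W₁ * T.1 * W₁ᴴ) = W₂ * T.2 * W₂ᴴ ∧ (W₁ * T.1 * W₁ᴴ).trace = 0 := by
    simp [Φ, congruence, add_neg_eq_zero]
  have hinj : LinearMap.ker Φ = ⊥ := by
    refine eq_bot_of_forall_isSelfAdjoint_eq_zero (fun T hT ↦ ?_) fun T hT hself ↦ ?_
    · obtain ⟨hpt, htr⟩ := (hker T).1 hT
      refine (hker _).2 ⟨?_, ?_⟩
      · simpa [← partialTranspose_conjTranspose, conjTranspose_mul, Matrix.mul_assoc,
          star_eq_conjTranspose] using congrArg conjTranspose hpt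
      · simpa [← trace_conjTranspose, conjTranspose_mul, Matrix.mul_assoc, star_eq_conjTranspose]
          using congrArg star htr
    · obtain ⟨hpt, htr⟩ := (hker T).1 hT
      obtain ⟨c, hc⟩ := hX.exists_congruence_eq_smul hW₁ hW₂ (congrArg Prod.fst hself)
        (congrArg Prod.snd hself) hpt
      have hc0 : c = 0 := by
        rw [hc, trace_smul] at htr
        exact (smul_eq_zero.1 htr).resolve_right htrace
      rw [hc0, zero_smul] at hc
      rw [hc, map_zero] at hpt
      exact Prod.ext (eq_zero_of_mul_mul_conjTranspose_eq_zero hL₁ hc)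
        (eq_zero_of_mul_mul_conjTranspose_eq_zero hL₂ hpt.symm)
  have hfinrank := LinearMap.finrank_le_finrank_of_injective (LinearMap.ker_eq_bot.1 hinj)
  simp only [Module.finrank_prod, Module.finrank_matrix, Fintype.card_sum, Module.finrank_self]
    at hfinrank
  linarith

end IsPPTExtremal

end ExtremalRays

section NormalForm

variable {m κ ι : Type*}

lemma productVector_one_right_ne_zero {f : m → ℂ} (hf : f ≠ 0) (z : ℂ) :
    productVector z 1 f ≠ 0 := fun h ↦
  hf (funext fun i ↦ by simpa [productVector] using congrFun h (Sum.inr i))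

lemma commutator_eq_of_sub_eq [Fintype m] [Fintype κ] [Fintype ι] {A B : Matrix m m ℂ}
    {X : Matrix m κ ℂ} {Y : Matrix m ι ℂ} (hX : A - B * Bᴴ = X * Xᴴ) (hY : A - Bᴴ * B = Y * Yᴴ) :
    B * Bᴴ - Bᴴ * B = Y * Yᴴ - X * Xᴴ := by
  rw [← hX, ← hY]
  abel

lemma nonempty_of_commutator_eq [Fintype m] [Fintype κ] [Fintype ι] {B : Matrix m m ℂ}
    {X : Matrix m κ ℂ} {Y : Matrix m ι ℂ} (hB : B * Bᴴ - Bᴴ * B = Y * Yᴴ - X * Xᴴ)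
    (hne : B * Bᴴ ≠ Bᴴ * B) : Nonempty κ := by
  by_contra hκ
  have : IsEmpty κ := not_nonempty_iff.1 hκ
  have hX : X * Xᴴ = 0 := by
    ext
    simp [mul_apply]
  rw [hX, sub_zero] at hB
  have hY : Y = 0 := by
    rw [← trace_mul_conjTranspose_self_eq_zero_iff, ← hB, trace_sub, trace_mul_comm, sub_self]
  rw [hY, Matrix.zero_mul, sub_eq_zero] at hB
  exact hne hB

lemma mul_conjTranspose_eq_vecMulVec [Fintype κ] [Unique κ] (X : Matrix m κ ℂ) :
    X * Xᴴ = vecMulVec (fun i ↦ X i default) (star fun i ↦ X i default) := by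
  ext
  simp [mul_apply, vecMulVec_apply]

lemma mulVec_const_of_unique [Fintype κ] [Unique κ] (X : Matrix m κ ℂ) (s : ℂ) :
    (X *ᵥ fun _ ↦ s) = s • fun i ↦ X i default := by
  ext
  simp [mulVec, dotProduct, mul_comm]

section SchurFactor

variable [DecidableEq m]

/-- The factor `[B, X; 1, 0]` of `[B Bᴴ + X Xᴴ, B; Bᴴ, 1]`. -/
def schurFactor (B : Matrix m m ℂ) (X : Matrix m κ ℂ) : Matrix (m ⊕ m) (m ⊕ κ) ℂ :=
  fromBlocks B X 1 0

variable [Fintype m]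

lemma fromBlocks_mul_schurFactor [DecidableEq κ] (B : Matrix m m ℂ) {X : Matrix m κ ℂ}
    {L : Matrix κ m ℂ} (hL : L * X = 1) :
    fromBlocks (0 : Matrix m m ℂ) 1 L (-(L * B)) * schurFactor B X = 1 := by
  simp [schurFactor, fromBlocks_multiply, hL]

variable [Fintype κ]

lemma schurFactor_mul_conjTranspose {A B : Matrix m m ℂ} {X : Matrix m κ ℂ}
    (hX : A - B * Bᴴ = X * Xᴴ) :
    fromBlocks A B Bᴴ 1 = schurFactor B X * (schurFactor B X)ᴴ := by
  simp [schurFactor, fromBlocks_conjTranspose, fromBlocks_multiply, ← hX]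

lemma partialTranspose_eq_schurFactor_mul_conjTranspose {A B : Matrix m m ℂ} {Y : Matrix m κ ℂ}
    (hY : A - Bᴴ * B = Y * Yᴴ) :
    partialTranspose (fromBlocks A B Bᴴ 1) = schurFactor Bᴴ Y * (schurFactor Bᴴ Y)ᴴ := by
  rw [partialTranspose_fromBlocks, ← schurFactor_mul_conjTranspose, conjTranspose_conjTranspose]
  rwa [conjTranspose_conjTranspose]

lemma schurFactor_mulVec {B : Matrix m m ℂ} {X : Matrix m κ ℂ} {f : m → ℂ} {g : κ → ℂ} {z : ℂ}
    (hf : B *ᵥ f + X *ᵥ g = z • f) :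
    schurFactor B X *ᵥ Sum.elim f g = productVector z 1 f := by
  simp [schurFactor, fromBlocks_mulVec, hf, productVector]

end SchurFactor

lemma posSemidef_sub_of_fromBlocks_one [Fintype m] [DecidableEq m] {A B : Matrix m m ℂ}
    (h : (fromBlocks A B Bᴴ 1).PosSemidef) : (A - B * Bᴴ).PosSemidef := by
  let : Invertible (1 : Matrix m m ℂ) := invertibleOne
  simpa using (PosDef.fromBlocks₂₂ A B PosDef.one).1 h

namespace IsPPTExtremal

variable [Fintype m] [DecidableEq m] {A B : Matrix m m ℂ}

lemma isProductRay_of_schur [Fintype κ] [Fintype ι] (hE : IsPPTExtremal (fromBlocks A B Bᴴ 1))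
    {X : Matrix m κ ℂ} {Y : Matrix m ι ℂ} (hX : A - B * Bᴴ = X * Xᴴ) (hY : A - Bᴴ * B = Y * Yᴴ)
    {f : m → ℂ} (hf : f ≠ 0) {g : κ → ℂ} {h : ι → ℂ} {z : ℂ} (hg : B *ᵥ f + X *ᵥ g = z • f)
    (hh : Bᴴ *ᵥ f + Y *ᵥ h = star z • f) : IsProductRay (fromBlocks A B Bᴴ 1) := by
  refine hE.isProductRay_of_mulVec_eq (schurFactor_mul_conjTranspose hX)
    (partialTranspose_eq_schurFactor_mul_conjTranspose hY) (schurFactor_mulVec hg)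
    (v₂ := Sum.elim f h) ?_ (productVector_one_right_ne_zero hf z)
  rw [star_one, schurFactor_mulVec hh]

lemma isProductRay_of_unique [Fintype κ] [Unique κ] [Fintype ι] [Unique ι]
    (hm : Fintype.card m ≤ 3) (hE : IsPPTExtremal (fromBlocks A B Bᴴ 1)) (hB : B * Bᴴ ≠ Bᴴ * B)
    {X : Matrix m κ ℂ} {Y : Matrix m ι ℂ} (hX : A - B * Bᴴ = X * Xᴴ) (hY : A - Bᴴ * B = Y * Yᴴ) :
    IsProductRay (fromBlocks A B Bᴴ 1) := by
  have hBXY := commutator_eq_of_sub_eq hX hY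
  rw [mul_conjTranspose_eq_vecMulVec X, mul_conjTranspose_eq_vecMulVec Y] at hBXY
  obtain ⟨f, z, s, t, hf, hBf, hBf'⟩ := exists_mulVec_add_smul_eq_smul hm hBXY fun h ↦
    hB (sub_eq_zero.1 (hBXY.trans (sub_eq_zero.2 h)))
  rw [← mulVec_const_of_unique] at hBf hBf'
  exact hE.isProductRay_of_schur hX hY hf hBf hBf'

/- The dimension count gives `(d + r₁)² + (d + r₂)² ≤ 4 d² + 1` for `d = card m`, which for `d ≤ 3`
leaves no room for `r₁ + r₂ ≥ 3`. -/
lemma card_eq_one_and_card_eq_one [Nonempty m] [Fintype κ] [Fintype ι] [DecidableEq κ]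
    [DecidableEq ι] (hm : Fintype.card m ≤ 3) (hE : IsPPTExtremal (fromBlocks A B Bᴴ 1))
    (hP : (fromBlocks A B Bᴴ 1).PosSemidef) (hB : B * Bᴴ ≠ Bᴴ * B)
    {X : Matrix m κ ℂ} {Y : Matrix m ι ℂ} (hX : A - B * Bᴴ = X * Xᴴ) (hY : A - Bᴴ * B = Y * Yᴴ)
    {L₁ : Matrix κ m ℂ} {L₂ : Matrix ι m ℂ} (hL₁ : L₁ * X = 1) (hL₂ : L₂ * Y = 1) :
    Fintype.card κ = 1 ∧ Fintype.card ι = 1 := by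
  have hBXY := commutator_eq_of_sub_eq hX hY
  have hκ : 0 < Fintype.card κ := Fintype.card_pos_iff.2 (nonempty_of_commutator_eq hBXY hB)
  have hι : 0 < Fintype.card ι := by
    refine Fintype.card_pos_iff.2 (nonempty_of_commutator_eq (B := Bᴴ) (X := Y) (Y := X) ?_ ?_)
    · rw [conjTranspose_conjTranspose, ← neg_sub, hBXY, neg_sub]
    · rw [conjTranspose_conjTranspose]
      exact hB.symm
  have htrace : (fromBlocks A B Bᴴ 1).trace ≠ 0 := fun h ↦ by
    obtain ⟨i⟩ := ‹Nonempty m›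
    simpa using congrFun₂ (hP.trace_eq_zero_iff.1 h) (Sum.inr i) (Sum.inr i)
  have hdim := hE.card_sq_add_card_sq_le htrace (fromBlocks_mul_schurFactor B hL₁)
    (fromBlocks_mul_schurFactor Bᴴ hL₂) (schurFactor_mul_conjTranspose hX)
    (partialTranspose_eq_schurFactor_mul_conjTranspose hY)
  simp only [Fintype.card_sum] at hdim
  have hsum : Fintype.card κ + Fintype.card ι < 3 := by
    by_contra! hsum
    nlinarith
  omega

theorem isProductRay_fromBlocks_one [Nonempty m] (hm : Fintype.card m ≤ 3)
    (hP : IsPPT (fromBlocks A B Bᴴ 1)) (hE : IsPPTExtremal (fromBlocks A B Bᴴ 1)) :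
    IsProductRay (fromBlocks A B Bᴴ 1) := by
  have hA₁ : (A - B * Bᴴ).PosSemidef := posSemidef_sub_of_fromBlocks_one hP.1
  have hA₂ : (A - Bᴴ * B).PosSemidef := by
    have hP₂ := hP.2
    rw [partialTranspose_fromBlocks] at hP₂
    simpa using posSemidef_sub_of_fromBlocks_one (B := Bᴴ) (by simpa using hP₂)
  obtain ⟨X, L₁, hX, hL₁⟩ := exists_eq_mul_conjTranspose_and_left_inverse hA₁
  obtain ⟨Y, L₂, hY, hL₂⟩ := exists_eq_mul_conjTranspose_and_left_inverse hA₂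
  by_cases hB : B * Bᴴ = Bᴴ * B
  · obtain ⟨f, z, hf, hBf, hBf'⟩ := exists_mulVec_eq_smul_of_normal hB
    exact hE.isProductRay_of_schur hX hY hf (g := 0) (h := 0) (by simpa using hBf)
      (by simpa using hBf')
  obtain ⟨h₁, h₂⟩ := hE.card_eq_one_and_card_eq_one hm hP.1 hB hX hY hL₁ hL₂
  obtain ⟨_⟩ := Fintype.card_eq_one_iff_nonempty_unique.1 h₁
  obtain ⟨_⟩ := Fintype.card_eq_one_iff_nonempty_unique.1 h₂
  exact hE.isProductRay_of_unique hm hB hX hY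

end IsPPTExtremal

end NormalForm

section Ampliation

variable {m κ : Type*}

/-- The operator `1 ⊗ S` from `ℂ² ⊗ ℂ^κ` to `ℂ² ⊗ ℂᵐ`. -/
def ampliation (S : Matrix m κ ℂ) : Matrix (m ⊕ m) (κ ⊕ κ) ℂ := fromBlocks S 0 0 S

lemma ampliation_mul_ampliation [Fintype m] [DecidableEq κ] {S : Matrix m κ ℂ} {L : Matrix κ m ℂ}
    (hL : L * S = 1) : ampliation L * ampliation S = 1 := by
  simp [ampliation, fromBlocks_multiply, hL]

variable [Fintype κ]

lemma ampliation_mulVec_productVector (S : Matrix m κ ℂ) (s t : ℂ) (f : κ → ℂ) :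
    ampliation S *ᵥ productVector s t f = productVector s t (S *ᵥ f) := by
  simp [ampliation, productVector, fromBlocks_mulVec, mulVec_smul]

lemma partialTranspose_ampliation_mul_mul (S : Matrix m κ ℂ) (Z : Matrix (κ ⊕ κ) (κ ⊕ κ) ℂ) :
    partialTranspose (ampliation S * Z * (ampliation S)ᴴ) =
      ampliation S * partialTranspose Z * (ampliation S)ᴴ := by
  rw [← fromBlocks_toBlocks Z, partialTranspose_fromBlocks]
  simp [ampliation, fromBlocks_conjTranspose, fromBlocks_multiply, partialTranspose_fromBlocks]

lemma IsPPT.ampliation_mul_mul [Finite m] {Z : Matrix (κ ⊕ κ) (κ ⊕ κ) ℂ} (hZ : IsPPT Z)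
    (S : Matrix m κ ℂ) :
    IsPPT (ampliation S * Z * (ampliation S)ᴴ) := by
  refine ⟨hZ.1.mul_mul_conjTranspose_same _, ?_⟩
  rw [partialTranspose_ampliation_mul_mul]
  exact hZ.2.mul_mul_conjTranspose_same _

section LeftInverse

variable [Fintype m] [DecidableEq κ] {S : Matrix m κ ℂ} {L : Matrix κ m ℂ} (hL : L * S = 1)

include hL

lemma ampliation_mul_mul_ampliation_mul_mul (Z : Matrix (κ ⊕ κ) (κ ⊕ κ) ℂ) :
    ampliation L * (ampliation S * Z * (ampliation S)ᴴ) * (ampliation L)ᴴ = Z := by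
  have hLS := ampliation_mul_ampliation hL
  calc ampliation L * (ampliation S * Z * (ampliation S)ᴴ) * (ampliation L)ᴴ
      = ampliation L * ampliation S * Z * (ampliation L * ampliation S)ᴴ := by
        simp only [conjTranspose_mul, Matrix.mul_assoc]
    _ = Z := by rw [hLS, conjTranspose_one, Matrix.one_mul, Matrix.mul_one]

lemma IsPPT.of_ampliation_mul_mul {Z : Matrix (κ ⊕ κ) (κ ⊕ κ) ℂ}
    (hZ : IsPPT (ampliation S * Z * (ampliation S)ᴴ)) : IsPPT Z := by
  simpa only [ampliation_mul_mul_ampliation_mul_mul hL] using hZ.ampliation_mul_mul L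

lemma IsPPTExtremal.of_ampliation_mul_mul {Z : Matrix (κ ⊕ κ) (κ ⊕ κ) ℂ}
    (hZ : IsPPTExtremal (ampliation S * Z * (ampliation S)ᴴ)) : IsPPTExtremal Z := by
  intro σ hadd hsub
  obtain ⟨c, hc⟩ := hZ (ampliation S * σ * (ampliation S)ᴴ)
    (by simpa only [Matrix.mul_add, Matrix.add_mul] using hadd.ampliation_mul_mul S)
    (by simpa only [Matrix.mul_sub, Matrix.sub_mul] using hsub.ampliation_mul_mul S)
  refine ⟨c, ?_⟩
  rw [← ampliation_mul_mul_ampliation_mul_mul hL σ, hc, Matrix.mul_smul, Matrix.smul_mul,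
    ampliation_mul_mul_ampliation_mul_mul hL]

lemma IsProductRay.ampliation_mul_mul {Z : Matrix (κ ⊕ κ) (κ ⊕ κ) ℂ} (hZ : IsProductRay Z) :
    IsProductRay (ampliation S * Z * (ampliation S)ᴴ) := by
  obtain ⟨s, t, f, c, hne, hc⟩ := hZ
  refine ⟨s, t, S *ᵥ f, c, fun h ↦ hne ?_, ?_⟩
  · rw [← one_mulVec (productVector s t f), ← ampliation_mul_ampliation hL, ← mulVec_mulVec,
      ampliation_mulVec_productVector, h, mulVec_zero]
  · rw [← ampliation_mulVec_productVector, ← mul_vecMulVec_star_mul_conjTranspose, hc,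
      Matrix.mul_smul, Matrix.smul_mul]

end LeftInverse

end Ampliation

section Compression

variable {m κ : Type*}

lemma exists_eq_fromBlocks_of_posSemidef {X : Matrix (m ⊕ m) (m ⊕ m) ℂ} (hX : X.PosSemidef) :
    ∃ A B C : Matrix m m ℂ, A.IsHermitian ∧ C.PosSemidef ∧ X = fromBlocks A B Bᴴ C := by
  refine ⟨X.toBlocks₁₁, X.toBlocks₁₂, X.toBlocks₂₂, hX.1.submatrix Sum.inl,
    hX.submatrix Sum.inr, ?_⟩
  conv_lhs => rw [← fromBlocks_toBlocks X]
  congr 1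
  ext i j
  exact (hX.1.apply _ _).symm

variable [Fintype m]

lemma mulVec_eq_zero_of_posSemidef_fromBlocks {A B B' C : Matrix m m ℂ}
    (h : (fromBlocks A B B' C).PosSemidef) {y : m → ℂ} (hy : C *ᵥ y = 0) : B *ᵥ y = 0 := by
  have hker := (h.dotProduct_mulVec_zero_iff (Sum.elim 0 y)).1 (by
    simp [fromBlocks_mulVec, dotProduct, hy])
  ext i
  simpa [fromBlocks_mulVec] using congrFun hker (Sum.inl i)

section LeftInverse

variable [Fintype κ] [DecidableEq κ] {C M : Matrix m m ℂ} {S : Matrix m κ ℂ} {L : Matrix κ m ℂ}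

lemma mul_conjTranspose_mul_conjTranspose_eq_self (hS : C = S * Sᴴ) (hL : L * S = 1)
    (hM : ∀ y, C *ᵥ y = 0 → M *ᵥ y = 0) : M * (Lᴴ * Sᴴ) = M := by
  classical
  have hC : C * (1 - Lᴴ * Sᴴ) = 0 := by
    rw [Matrix.mul_sub, Matrix.mul_one, hS, Matrix.mul_assoc, ← Matrix.mul_assoc Sᴴ,
      ← conjTranspose_mul L, hL, conjTranspose_one, Matrix.one_mul, sub_self]
  have hM' : M * (1 - Lᴴ * Sᴴ) = 0 := ext_of_mulVec_single fun j ↦ by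
    rw [← mulVec_mulVec, zero_mulVec]
    exact hM _ (by rw [mulVec_mulVec, hC, zero_mulVec])
  rwa [Matrix.mul_sub, Matrix.mul_one, sub_eq_zero, eq_comm] at hM'

lemma mul_mul_mul_conjTranspose_mul_conjTranspose_eq_self (hS : C = S * Sᴴ) (hL : L * S = 1)
    (hM : ∀ y, C *ᵥ y = 0 → M *ᵥ y = 0) (hM' : ∀ y, C *ᵥ y = 0 → Mᴴ *ᵥ y = 0) :
    S * (L * M * Lᴴ) * Sᴴ = M := by
  have hleft : S * L * M = M := by
    simpa using congrArg conjTranspose (mul_conjTranspose_mul_conjTranspose_eq_self hS hL hM')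
  calc S * (L * M * Lᴴ) * Sᴴ = S * L * (M * (Lᴴ * Sᴴ)) := by simp only [Matrix.mul_assoc]
    _ = M := by rw [mul_conjTranspose_mul_conjTranspose_eq_self hS hL hM, hleft]

lemma fromBlocks_eq_ampliation_mul_mul {A B : Matrix m m ℂ} (hA : A.IsHermitian)
    (hS : C = S * Sᴴ) (hL : L * S = 1) (hkA : ∀ y, C *ᵥ y = 0 → A *ᵥ y = 0)
    (hkB : ∀ y, C *ᵥ y = 0 → B *ᵥ y = 0) (hkB' : ∀ y, C *ᵥ y = 0 → Bᴴ *ᵥ y = 0) :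
    fromBlocks A B Bᴴ C = ampliation S *
      fromBlocks (L * A * Lᴴ) (L * B * Lᴴ) (L * B * Lᴴ)ᴴ 1 * (ampliation S)ᴴ := by
  have hAS := mul_mul_mul_conjTranspose_mul_conjTranspose_eq_self hS hL hkA (by rwa [hA.eq])
  have hBS := mul_mul_mul_conjTranspose_mul_conjTranspose_eq_self hS hL hkB hkB'
  have hBS' : S * (L * (Bᴴ * Lᴴ)) * Sᴴ = Bᴴ := by
    simpa [Matrix.mul_assoc] using congrArg conjTranspose hBS
  simp [ampliation, fromBlocks_conjTranspose, fromBlocks_multiply, hAS, hBS, hBS', hS]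

end LeftInverse

namespace IsPPTExtremal

lemma isProductRay_of_mulVec_ne_zero {A B C : Matrix m m ℂ}
    (hE : IsPPTExtremal (fromBlocks A B Bᴴ C)) (hP : IsPPT (fromBlocks A B Bᴴ C)) {y : m → ℂ}
    (hB : B *ᵥ y = 0) (hB' : Bᴴ *ᵥ y = 0) (hA : A *ᵥ y ≠ 0) :
    IsProductRay (fromBlocks A B Bᴴ C) := by
  obtain ⟨W₁, -, hW₁, -⟩ := exists_eq_mul_conjTranspose_and_left_inverse hP.1
  obtain ⟨W₂, -, hW₂, -⟩ := exists_eq_mul_conjTranspose_and_left_inverse hP.2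
  refine hE.isProductRay_of_mulVec_eq hW₁ hW₂
    (v₁ := W₁ᴴ *ᵥ Sum.elim y 0) (v₂ := W₂ᴴ *ᵥ Sum.elim y 0) (s := 1) (t := 0) (f := A *ᵥ y)
    ?_ ?_ fun h ↦ hA (funext fun i ↦ ?_)
  · rw [mulVec_mulVec, ← hW₁, fromBlocks_mulVec]
    simp [productVector, hB']
  · rw [mulVec_mulVec, ← hW₂, partialTranspose_fromBlocks, fromBlocks_mulVec]
    simp [productVector, hB]
  · simpa [productVector] using congrFun h (Sum.inl i)

/- Compressing to the range of the lower right block reduces to the case where that block is `1`. -/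
theorem isProductRay_of_card_le_three (hm : Fintype.card m ≤ 3) {X : Matrix (m ⊕ m) (m ⊕ m) ℂ}
    (hE : IsPPTExtremal X) (hP : IsPPT X) (hX : X ≠ 0) : IsProductRay X := by
  obtain ⟨A, B, C, hA, hC, rfl⟩ := exists_eq_fromBlocks_of_posSemidef hP.1
  have hkB : ∀ y, C *ᵥ y = 0 → B *ᵥ y = 0 := fun y ↦
    mulVec_eq_zero_of_posSemidef_fromBlocks hP.1
  have hkB' : ∀ y, C *ᵥ y = 0 → Bᴴ *ᵥ y = 0 := fun y ↦
    mulVec_eq_zero_of_posSemidef_fromBlocks (partialTranspose_fromBlocks A B Bᴴ C ▸ hP.2)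
  by_cases hkA : ∀ y, C *ᵥ y = 0 → A *ᵥ y = 0
  · obtain ⟨S, L, hS, hL⟩ := exists_eq_mul_conjTranspose_and_left_inverse hC
    have hXR := fromBlocks_eq_ampliation_mul_mul hA hS hL hkA hkB hkB'
    have : Nonempty (Fin C.rank) := by
      by_contra hempty
      have : IsEmpty (Fin C.rank) := not_nonempty_iff.1 hempty
      exact hX (hXR.trans (by ext; simp [mul_apply]))
    rw [hXR] at hP hE ⊢
    refine IsProductRay.ampliation_mul_mul hL
      (isProductRay_fromBlocks_one ?_ (hP.of_ampliation_mul_mul hL) (hE.of_ampliation_mul_mul hL))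
    exact (Fintype.card_fin _).trans_le ((rank_le_card_width C).trans hm)
  · push Not at hkA
    obtain ⟨y, hCy, hAy⟩ := hkA
    exact hE.isProductRay_of_mulVec_ne_zero hP (hkB y hCy) (hkB' y hCy) hAy

end IsPPTExtremal

end Compression

section TraceBound

variable {κ : Type*} [Fintype κ]

lemma convex_setOf_posSemidef_and_trace_le (M : ℝ) :
    Convex ℝ {P : Matrix κ κ ℂ | P.PosSemidef ∧ P.trace.re ≤ M} := by
  have hpsd : Convex ℝ {P : Matrix κ κ ℂ | P.PosSemidef} := fun P hP Q hQ a b ha hb _ ↦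
    (PosSemidef.smul hP ha).add (PosSemidef.smul hQ hb)
  exact hpsd.inter (convex_halfSpace_le ⟨fun P Q ↦ by simp, fun c P ↦ by simp⟩ M)

open scoped MatrixOrder Matrix.Norms.L2Operator in
lemma isClosed_setOf_posSemidef {κ : Type*} [Finite κ] :
    IsClosed {P : Matrix κ κ ℂ | P.PosSemidef} := by
  classical
  cases nonempty_fintype κ
  simpa only [nonneg_iff_posSemidef] using CStarAlgebra.isClosed_nonneg (A := Matrix κ κ ℂ)

open scoped Matrix.Norms.Frobenius in
lemma frobenius_norm_sq_eq_re_trace (S : Matrix κ κ ℂ) : ‖S‖ ^ 2 = (S * Sᴴ).trace.re := by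
  rw [frobenius_norm_def, ← Real.sqrt_eq_rpow, Real.sq_sqrt (by positivity)]
  simp [trace, mul_apply, Complex.mul_conj, Complex.normSq_eq_norm_sq,
    -Complex.ofReal_pow]

open scoped MatrixOrder Matrix.Norms.Frobenius in
lemma isCompact_setOf_posSemidef_and_trace_le (M : ℝ) :
    IsCompact {P : Matrix κ κ ℂ | P.PosSemidef ∧ P.trace.re ≤ M} := by
  classical
  have hball : IsCompact ((fun S : Matrix κ κ ℂ ↦ S * Sᴴ) '' Metric.closedBall 0 √M) :=
    (isCompact_closedBall _ _).image (by fun_prop)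
  refine hball.of_isClosed_subset ?_ ?_
  · have hcont : Continuous fun P : Matrix κ κ ℂ ↦ P.trace.re := by fun_prop
    exact isClosed_setOf_posSemidef.inter (isClosed_le hcont continuous_const)
  · rintro P ⟨hP, hM⟩
    obtain ⟨S, rfl⟩ := CStarAlgebra.nonneg_iff_eq_mul_star_self.1 hP.nonneg
    refine ⟨S, ?_, rfl⟩
    rw [mem_closedBall_zero_iff]
    exact Real.le_sqrt_of_sq_le ((frobenius_norm_sq_eq_re_trace S).trans_le hM)

end TraceBound

section States

variable {m : Type*}

lemma IsPPT.add {X Y : Matrix (m ⊕ m) (m ⊕ m) ℂ} (hX : IsPPT X) (hY : IsPPT Y) :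
    IsPPT (X + Y) :=
  ⟨hX.1.add hY.1, by rw [map_add]; exact hX.2.add hY.2⟩

lemma IsPPT.smul {X : Matrix (m ⊕ m) (m ⊕ m) ℂ} (hX : IsPPT X) {c : ℝ} (hc : 0 ≤ c) :
    IsPPT (c • X) :=
  ⟨hX.1.smul hc, by rw [LinearMap.map_smul_of_tower]; exact hX.2.smul hc⟩

lemma continuous_partialTranspose : Continuous (partialTranspose (m := m)) :=
  continuous_matrix <| by
    rintro (i | i) (j | j) <;> exact continuous_id.matrix_elem _ _

variable [Fintype m]

/-- The PPT states on `ℂ² ⊗ ℂᵐ`: the compact convex base `tr = 1` of the cone of PPT matrices. -/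
def pptStates (m : Type*) [Fintype m] : Set (Matrix (m ⊕ m) (m ⊕ m) ℂ) :=
  {ρ | IsPPT ρ ∧ ρ.trace = 1}

lemma convex_pptStates : Convex ℝ (pptStates m) := by
  rintro P ⟨hP, hP1⟩ Q ⟨hQ, hQ1⟩ a b ha hb hab
  refine ⟨(hP.smul ha).add (hQ.smul hb), ?_⟩
  rw [trace_add, trace_smul, trace_smul, hP1, hQ1, ← add_smul, hab, one_smul]

lemma isCompact_pptStates : IsCompact (pptStates m) := by
  refine (isCompact_setOf_posSemidef_and_trace_le 1).of_isClosed_subset ?_ fun P hP ↦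
    ⟨hP.1.1, by simp [hP.2]⟩
  exact (isClosed_setOf_posSemidef.inter
    (isClosed_setOf_posSemidef.preimage continuous_partialTranspose)).inter
      (isClosed_eq (by fun_prop) continuous_const)

lemma isPPTExtremal_of_mem_extremePoints {ρ : Matrix (m ⊕ m) (m ⊕ m) ℂ}
    (h : ρ ∈ (pptStates m).extremePoints ℝ) : IsPPTExtremal ρ := by
  obtain ⟨⟨hρ, hρ1⟩, hext⟩ := mem_extremePoints.1 h
  intro σ hadd hsub
  have hadd_tr := Complex.le_def.1 hadd.1.trace_nonneg
  have hsub_tr := Complex.le_def.1 hsub.1.trace_nonneg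
  simp only [trace_add, trace_sub, hρ1, Complex.zero_re, Complex.add_re, Complex.sub_re,
    Complex.one_re, Complex.zero_im, Complex.add_im, Complex.one_im, zero_add] at hadd_tr hsub_tr
  set t := σ.trace.re
  have hσ_tr : σ.trace = t := Complex.ext rfl hadd_tr.2.symm
  set τ := (1 / 2 : ℝ) • (σ - t • ρ) with hτ
  have hτ_tr : τ.trace = 0 := by
    rw [hτ, trace_smul, trace_sub, trace_smul, hρ1, hσ_tr]
    simp
  have hτ_add : IsPPT (ρ + τ) := by
    convert (hadd.smul (c := 1 / 2) (by simp)).add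
      (hρ.smul (c := (1 - t) / 2) (by linarith)) using 1
    module
  have hτ_sub : IsPPT (ρ - τ) := by
    convert (hsub.smul (c := 1 / 2) (by simp)).add
      (hρ.smul (c := (1 + t) / 2) (by linarith)) using 1
    module
  have hρτ : ρ + τ = ρ := (hext _ ⟨hτ_add, by rw [trace_add, hτ_tr, hρ1, add_zero]⟩ _
    ⟨hτ_sub, by rw [trace_sub, hτ_tr, hρ1, sub_zero]⟩
    ⟨1 / 2, 1 / 2, by norm_num, by norm_num, by norm_num, by module⟩).1
  have hτ0 : τ = 0 := by simpa using hρτ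
  exact ⟨t, sub_eq_zero.1 ((smul_eq_zero.1 hτ0).resolve_left (by norm_num))⟩

lemma trace_mul_vecMulVec_star {κ : Type*} [Fintype κ] (C : Matrix κ κ ℂ) (q : κ → ℂ) :
    (C * vecMulVec q (star q)).trace = star q ⬝ᵥ C *ᵥ q := by
  rw [mul_vecMulVec, trace_vecMulVec, dotProduct_comm]

section BlockPositive

variable {C : Matrix (m ⊕ m) (m ⊕ m) ℂ}
  (hC : ∀ s t f, 0 ≤ (star (productVector s t f) ⬝ᵥ C *ᵥ productVector s t f).re)

include hC

lemma IsProductRay.re_trace_mul_nonneg {ρ : Matrix (m ⊕ m) (m ⊕ m) ℂ} (hρ : IsProductRay ρ)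
    (hρ1 : ρ.trace = 1) : 0 ≤ (C * ρ).trace.re := by
  obtain ⟨s, t, f, c, hne, hc⟩ := hρ
  have hc_pos : 0 < c := by
    have hpos := dotProduct_star_self_pos_iff.2 hne
    rw [dotProduct_comm, ← trace_vecMulVec, hc, trace_smul, hρ1] at hpos
    simpa using hpos
  have hnonneg := hC s t f
  rw [← trace_mul_vecMulVec_star, hc, Matrix.mul_smul, trace_smul, Complex.smul_re,
    smul_eq_mul] at hnonneg
  exact nonneg_of_mul_nonneg_right hnonneg hc_pos

lemma re_trace_mul_nonneg_of_mem_pptStates (hm : Fintype.card m ≤ 3)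
    {ρ : Matrix (m ⊕ m) (m ⊕ m) ℂ} (hρ : ρ ∈ pptStates m) : 0 ≤ (C * ρ).trace.re := by
  have : LocallyConvexSpace ℝ (Matrix (m ⊕ m) (m ⊕ m) ℂ) :=
    inferInstanceAs (LocallyConvexSpace ℝ (m ⊕ m → m ⊕ m → ℂ))
  suffices pptStates m ⊆ {ρ | 0 ≤ (C * ρ).trace.re} from this hρ
  rw [← closure_convexHull_extremePoints isCompact_pptStates convex_pptStates]
  refine closure_minimal (convexHull_min (fun σ hσ ↦ ?_) ?_)
    (isClosed_le continuous_const (by fun_prop))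
  · obtain ⟨hσ_ppt, hσ1⟩ := extremePoints_subset hσ
    have hσ0 : σ ≠ 0 := by
      rintro rfl
      simp at hσ1
    exact ((isPPTExtremal_of_mem_extremePoints hσ).isProductRay_of_card_le_three hm hσ_ppt
      hσ0).re_trace_mul_nonneg hC hσ1
  · exact convex_halfSpace_ge ⟨fun P Q ↦ by simp [Matrix.mul_add], fun c P ↦ by simp⟩ 0

lemma IsPPT.re_trace_mul_nonneg (hm : Fintype.card m ≤ 3) {ρ : Matrix (m ⊕ m) (m ⊕ m) ℂ}
    (hρ : IsPPT ρ) : 0 ≤ (C * ρ).trace.re := by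
  obtain ⟨t, ht, htr⟩ := RCLike.nonneg_iff_exists_ofReal.1 hρ.1.trace_nonneg
  obtain rfl | ht := ht.eq_or_lt
  · rw [hρ.1.trace_eq_zero_iff.1 (by simpa using htr.symm)]
    simp
  · have hstate := re_trace_mul_nonneg_of_mem_pptStates hC hm (ρ := t⁻¹ • ρ)
      ⟨hρ.smul (inv_nonneg.2 ht.le), by
        rw [trace_smul, ← htr]
        simp [ht.ne']⟩
    rw [Matrix.mul_smul, trace_smul, Complex.smul_re, smul_eq_mul] at hstate
    exact nonneg_of_mul_nonneg_right hstate (inv_pos.2 ht)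

end BlockPositive

end States

section Duality

section Separation

variable {κ : Type*} [Fintype κ]

lemma exists_forall_eq_trace_mul (f : Matrix κ κ ℂ →ₗ[ℂ] ℂ) :
    ∃ G : Matrix κ κ ℂ, ∀ X, f X = (G * X).trace := by
  classical
  refine ⟨of fun j i ↦ f (single i j 1), fun X ↦ ?_⟩
  suffices f = traceLinearMap κ ℂ ℂ ∘ₗ mulLeftLinearMap κ ℂ (of fun j i ↦ f (single i j 1)) from
    LinearMap.congr_fun this X
  refine Matrix.ext_linearMap ℂ fun i j ↦ LinearMap.ext_ring ?_
  simp [trace_mul_single]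

lemma exists_isHermitian_forall_re_eq_re_trace_mul (f : Matrix κ κ ℂ →ₗ[ℂ] ℂ) :
    ∃ R : Matrix κ κ ℂ, R.IsHermitian ∧ ∀ X, X.IsHermitian → (f X).re = (R * X).trace.re := by
  obtain ⟨G, hG⟩ := exists_forall_eq_trace_mul f
  refine ⟨realPart G, (realPart G).2, fun X hX ↦ ?_⟩
  have hstar : (star G * X).trace = star (G * X).trace := by
    rw [← trace_conjTranspose, conjTranspose_mul, hX.eq, trace_mul_comm, star_eq_conjTranspose]
  rw [hG, realPart_apply_coe, Matrix.smul_mul, trace_smul, Matrix.add_mul, trace_add, hstar,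
    Complex.smul_re, Complex.add_re, RCLike.star_def, Complex.conj_re, smul_eq_mul]
  ring

lemma posSemidef_sub_smul_one [DecidableEq κ] {R : Matrix κ κ ℂ} (hR : R.IsHermitian) {M u : ℝ}
    (hM : 0 < M)
    (h : ∀ P : Matrix κ κ ℂ, P.PosSemidef → P.trace.re ≤ M → u < (R * P).trace.re) :
    (R - (u / M) • (1 : Matrix κ κ ℂ)).PosSemidef := by
  have hH : (R - (u / M) • (1 : Matrix κ κ ℂ)).IsHermitian :=
    hR.sub ((IsSelfAdjoint.all (u / M)).smul isHermitian_one)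
  refine hH.posSemidef_iff_eigenvalues_nonneg.2 fun i ↦ ?_
  set v : κ → ℂ := (hH.eigenvectorBasis i).ofLp
  have hv : star v ⬝ᵥ v = 1 := by
    rw [dotProduct_comm, ← EuclideanSpace.inner_eq_star_dotProduct, inner_self_eq_norm_sq_to_K,
      hH.eigenvectorBasis.orthonormal.1 i]
    simp
  have hRv : u < M * (star v ⬝ᵥ R *ᵥ v).re := by
    have hu := h (M • vecMulVec v (star v)) ((posSemidef_vecMulVec_self_star v).smul hM.le)
      (by rw [trace_smul, trace_vecMulVec, dotProduct_comm, hv]; simp)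
    rwa [Matrix.mul_smul, trace_smul, trace_mul_vecMulVec_star, Complex.smul_re,
      smul_eq_mul] at hu
  have heig : hH.eigenvalues i = (star v ⬝ᵥ R *ᵥ v).re - u / M := by
    rw [hH.eigenvalues_eq, sub_mulVec, dotProduct_sub, smul_mulVec, one_mulVec, dotProduct_smul, hv]
    simp [v]
  rw [Pi.zero_apply, heig, sub_nonneg, div_le_iff₀' hM]
  exact hRv.le

end Separation

variable {m : Type*}

lemma isHermitian_partialTranspose {X : Matrix (m ⊕ m) (m ⊕ m) ℂ} (hX : X.IsHermitian) :
    (partialTranspose X).IsHermitian := by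
  rw [IsHermitian, ← partialTranspose_conjTranspose, hX.eq]

variable [Fintype m]

open scoped Pointwise in
lemma exists_isHermitian_separating {C : Matrix (m ⊕ m) (m ⊕ m) ℂ} (hH : C.IsHermitian)
    (hC : ∀ P Q, P.PosSemidef → Q.PosSemidef → C ≠ P + partialTranspose Q) {M : ℝ} (hM : 0 ≤ M) :
    ∃ (R : Matrix (m ⊕ m) (m ⊕ m) ℂ) (u : ℝ), R.IsHermitian ∧ (R * C).trace.re < u ∧
      (∀ P, P.PosSemidef → P.trace.re ≤ M → u < (R * P).trace.re) ∧
      ∀ Q, Q.PosSemidef → Q.trace.re ≤ M → u < (partialTranspose R * Q).trace.re := by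
  have : LocallyConvexSpace ℝ (Matrix (m ⊕ m) (m ⊕ m) ℂ) :=
    inferInstanceAs (LocallyConvexSpace ℝ (m ⊕ m → m ⊕ m → ℂ))
  set K := {P : Matrix (m ⊕ m) (m ⊕ m) ℂ | P.PosSemidef ∧ P.trace.re ≤ M}
  set D := K + partialTranspose '' K
  have hCD : C ∉ D := by
    rintro ⟨P, hP, _, ⟨Q, hQ, rfl⟩, rfl⟩
    exact hC P Q hP.1 hQ.1 rfl
  have hK : IsCompact K := isCompact_setOf_posSemidef_and_trace_le M
  have hK' : Convex ℝ K := convex_setOf_posSemidef_and_trace_le M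
  have hD : IsClosed D := (hK.add (hK.image continuous_partialTranspose)).isClosed
  have hD' : Convex ℝ D := hK'.add (hK'.linear_image (partialTranspose.restrictScalars ℝ))
  have hK0 : 0 ∈ K := ⟨PosSemidef.zero, by simpa using hM⟩
  obtain ⟨f, u, hfC, hfD⟩ := RCLike.geometric_hahn_banach_point_closed (𝕜 := ℂ) hD' hD hCD
  obtain ⟨R, hR, hfR⟩ := exists_isHermitian_forall_re_eq_re_trace_mul f.toLinearMap
  refine ⟨R, u, hR, (hfR C hH).symm.trans_lt hfC, fun P hP hPM ↦ ?_, fun Q hQ hQM ↦ ?_⟩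
  · rw [← hfR P hP.1]
    exact hfD P ⟨P, ⟨hP, hPM⟩, 0, ⟨0, hK0, map_zero _⟩, add_zero P⟩
  · rw [← trace_mul_partialTranspose, ← hfR _ (isHermitian_partialTranspose hQ.1)]
    exact hfD _ ⟨0, hK0, _, ⟨Q, ⟨hQ, hQM⟩, rfl⟩, zero_add _⟩

/- Only the compact set of sums `P + partialTranspose Q` with traces at most `M` is separated from
`C`, so the separating `R` is PPT up to an error; `M > tr C` makes the error harmless. -/
theorem exists_posSemidef_eq_add_partialTranspose {C : Matrix (m ⊕ m) (m ⊕ m) ℂ}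
    (hH : C.IsHermitian) (hC : ∀ ρ, IsPPT ρ → 0 ≤ (C * ρ).trace.re) :
    ∃ P Q, P.PosSemidef ∧ Q.PosSemidef ∧ C = P + partialTranspose Q := by
  classical
  by_contra! hCPQ
  have htr : 0 ≤ C.trace.re := by
    simpa using hC 1 ⟨PosSemidef.one, by rw [partialTranspose_one]; exact PosSemidef.one⟩
  set M := C.trace.re + 1 with hM_def
  have hM : 0 < M := by positivity
  obtain ⟨R, u, hR, hRC, hRP, hRQ⟩ := exists_isHermitian_separating hH hCPQ hM.le
  have hu : u < 0 := by simpa using hRP 0 PosSemidef.zero (by simpa using hM.le)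
  have hppt : IsPPT (R - (u / M) • (1 : Matrix (m ⊕ m) (m ⊕ m) ℂ)) := by
    refine ⟨posSemidef_sub_smul_one hR hM hRP, ?_⟩
    rw [map_sub, LinearMap.map_smul_of_tower, partialTranspose_one]
    exact posSemidef_sub_smul_one (isHermitian_partialTranspose hR) hM hRQ
  have hnonneg : 0 ≤ (R * C).trace.re - u / M * C.trace.re := by
    simpa [trace_mul_comm C, Matrix.sub_mul] using hC _ hppt
  have hlt : u / M * C.trace.re = u - u / M := by
    rw [eq_sub_of_add_eq hM_def.symm, mul_sub, div_mul_cancel₀ _ hM.ne', mul_one]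
  linarith [div_neg_of_neg_of_pos hu hM]

theorem exists_posSemidef_eq_add_partialTranspose_of_card_le_three (hm : Fintype.card m ≤ 3)
    {C : Matrix (m ⊕ m) (m ⊕ m) ℂ} (hH : C.IsHermitian)
    (hC : ∀ s t f, 0 ≤ (star (productVector s t f) ⬝ᵥ C *ᵥ productVector s t f).re) :
    ∃ P Q, P.PosSemidef ∧ Q.PosSemidef ∧ C = P + partialTranspose Q :=
  exists_posSemidef_eq_add_partialTranspose hH fun _ hρ ↦ hρ.re_trace_mul_nonneg hC hm

end Duality

section Choi

variable {ι κ : Type*}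

/-- The product vector `u ⊗ f`. -/
def tensorVector (u : ι → ℂ) (f : κ → ℂ) : ι × κ → ℂ := fun a ↦ u a.1 * f a.2

section QubitFactor

/-- Identifies `ℂ² ⊗ ℂᵏ` with the block form `ℂᵏ ⊕ ℂᵏ`. -/
def finTwoProdEquivSum (κ : Type*) : Fin 2 × κ ≃ κ ⊕ κ :=
  (finTwoEquiv.prodCongr (Equiv.refl κ)).trans (Equiv.boolProdEquivSum κ)

lemma partialTranspose_finTwoProdEquivSum (X : Matrix (κ ⊕ κ) (κ ⊕ κ) ℂ) (i j : Fin 2) (k l : κ) :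
    partialTranspose X (finTwoProdEquivSum κ (i, k)) (finTwoProdEquivSum κ (j, l)) =
      X (finTwoProdEquivSum κ (j, k)) (finTwoProdEquivSum κ (i, l)) := by
  fin_cases i <;> fin_cases j <;> rfl

lemma productVector_comp_finTwoProdEquivSum (s t : ℂ) (f : κ → ℂ) :
    productVector s t f ∘ finTwoProdEquivSum κ = tensorVector ![s, t] f := by
  ext ⟨i, k⟩
  fin_cases i <;> rfl

theorem exists_posSemidef_forall_apply_eq_add [Fintype κ] (hκ : Fintype.card κ ≤ 3)
    {C : Matrix (Fin 2 × κ) (Fin 2 × κ) ℂ} (hH : C.IsHermitian)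
    (hC : ∀ u f, 0 ≤ star (tensorVector u f) ⬝ᵥ C *ᵥ tensorVector u f) :
    ∃ P Q : Matrix (Fin 2 × κ) (Fin 2 × κ) ℂ, P.PosSemidef ∧ Q.PosSemidef ∧
      ∀ i j k l, C (i, k) (j, l) = P (i, k) (j, l) + Q (j, k) (i, l) := by
  set e := finTwoProdEquivSum κ
  obtain ⟨P, Q, hP, hQ, hPQ⟩ := exists_posSemidef_eq_add_partialTranspose_of_card_le_three hκ
    (hH.submatrix e.symm) fun s t f ↦ by
      have h := hC ![s, t] f
      rw [← productVector_comp_finTwoProdEquivSum] at h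
      rw [submatrix_mulVec_equiv, Equiv.symm_symm, dotProduct_comp_equiv_symm]
      exact (Complex.le_def.1 h).1
  refine ⟨P.submatrix e e, Q.submatrix e e, hP.submatrix e, hQ.submatrix e, fun i j k l ↦ ?_⟩
  calc C (i, k) (j, l) = C.submatrix e.symm e.symm (e (i, k)) (e (j, l)) := by simp
    _ = _ := by rw [hPQ, Matrix.add_apply, partialTranspose_finTwoProdEquivSum]; rfl

end QubitFactor

section PositiveMap

variable {H : Matrix ι ι ℂ →ₗ[ℂ] Matrix κ κ ℂ}

/-- The Choi matrix of a linear map `H` between matrix algebras, whose block `(i, j)` is the image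
under `H` of the matrix unit `single i j 1`. -/
def choi [DecidableEq ι] (H : Matrix ι ι ℂ →ₗ[ℂ] Matrix κ κ ℂ) : Matrix (ι × κ) (ι × κ) ℂ :=
  of fun a b ↦ H (single a.1 b.1 1) a.2 b.2

lemma map_apply_eq_sum_choi [Fintype ι] [DecidableEq ι] (H : Matrix ι ι ℂ →ₗ[ℂ] Matrix κ κ ℂ)
    (X : Matrix ι ι ℂ) (k l : κ) :
    H X k l = ∑ i, ∑ j, X i j * choi H (i, k) (j, l) := by
  conv_lhs => rw [matrix_eq_sum_single X]
  simp only [map_sum, Matrix.sum_apply]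
  refine Finset.sum_congr rfl fun i _ ↦ Finset.sum_congr rfl fun j _ ↦ ?_
  rw [← mul_one (X i j), ← smul_eq_mul, ← smul_single, map_smul]
  simp [choi]

lemma isHermitian_map_of_forall_posSemidef [Finite ι]
    (hH : ∀ P : Matrix ι ι ℂ, P.PosSemidef → (H P).PosSemidef)
    {X : Matrix ι ι ℂ} (hX : X.IsHermitian) : (H X).IsHermitian := by
  classical
  obtain ⟨δ, hδ, hpos⟩ := exists_pos_forall_posSemidef_one_add_smul hX
  have hHX : H X = δ⁻¹ • (H (1 + δ • X) - H 1) := by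
    rw [map_add, add_sub_cancel_left, LinearMap.map_smul_of_tower, inv_smul_smul₀ hδ.ne']
  rw [hHX]
  exact (IsSelfAdjoint.all δ⁻¹).smul
    ((hH _ (hpos δ (abs_of_pos hδ).le)).1.sub (hH 1 PosSemidef.one).1)

lemma conjTranspose_map_of_forall_posSemidef [Finite ι]
    (hH : ∀ P : Matrix ι ι ℂ, P.PosSemidef → (H P).PosSemidef)
    (X : Matrix ι ι ℂ) : (H X)ᴴ = H Xᴴ := by
  have hre : (H (realPart X))ᴴ = H (realPart X) :=
    isHermitian_map_of_forall_posSemidef hH (realPart X).2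
  have him : (H (imaginaryPart X))ᴴ = H (imaginaryPart X) :=
    isHermitian_map_of_forall_posSemidef hH (imaginaryPart X).2
  conv_lhs => rw [← realPart_add_I_smul_imaginaryPart X]
  rw [← star_eq_conjTranspose X, ← realPart_sub_I_smul_imaginaryPart X, map_add, map_sub, map_smul,
    conjTranspose_add, conjTranspose_smul, hre, him]
  simp [sub_eq_add_neg]

lemma isHermitian_choi [Finite ι] [DecidableEq ι]
    (hH : ∀ P : Matrix ι ι ℂ, P.PosSemidef → (H P).PosSemidef) :
    (choi H).IsHermitian := by
  ext ⟨i, k⟩ ⟨j, l⟩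
  simp only [choi, conjTranspose_apply, of_apply]
  rw [← conjTranspose_apply, conjTranspose_map_of_forall_posSemidef hH,
    conjTranspose_single, star_one]

variable [Fintype ι] [DecidableEq ι] [Fintype κ]

lemma star_tensorVector_dotProduct_choi_mulVec (H : Matrix ι ι ℂ →ₗ[ℂ] Matrix κ κ ℂ)
    (u : ι → ℂ) (f : κ → ℂ) :
    star (tensorVector u f) ⬝ᵥ choi H *ᵥ tensorVector u f =
      star f ⬝ᵥ H (vecMulVec (star u) u) *ᵥ f := by
  simp only [dotProduct, mulVec, tensorVector, Pi.star_apply, star_mul', map_apply_eq_sum_choi H,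
    vecMulVec_apply, Fintype.sum_prod_type, Finset.mul_sum, Finset.sum_mul]
  rw [Finset.sum_comm]
  refine Finset.sum_congr rfl fun k _ ↦ ?_
  rw [Finset.sum_comm (s := Finset.univ (α := κ))]
  refine Finset.sum_congr rfl fun i _ ↦ ?_
  rw [Finset.sum_comm]
  exact Finset.sum_congr rfl fun l _ ↦ Finset.sum_congr rfl fun j _ ↦ by ring

lemma star_tensorVector_dotProduct_choi_mulVec_nonneg
    (hH : ∀ P : Matrix ι ι ℂ, P.PosSemidef → (H P).PosSemidef) (u : ι → ℂ) (f : κ → ℂ) :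
    0 ≤ star (tensorVector u f) ⬝ᵥ choi H *ᵥ tensorVector u f := by
  rw [star_tensorVector_dotProduct_choi_mulVec]
  exact (hH _ (posSemidef_vecMulVec_star_self u)).dotProduct_mulVec_nonneg f

end PositiveMap

lemma sum_conjTranspose_mul_mul_apply [Fintype ι] {N : Type*} [Fintype N] (v : N → ι × κ → ℂ)
    (X : Matrix ι ι ℂ) (k l : κ) :
    (∑ p, (of fun i k ↦ star (v p (i, k)))ᴴ * X * of fun i k ↦ star (v p (i, k))) k l =
      ∑ i, ∑ j, X i j * (∑ p, vecMulVec (v p) (star (v p))) (i, k) (j, l) := by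
  simp only [Matrix.sum_apply, mul_apply, conjTranspose_apply, of_apply, star_star, vecMulVec_apply,
    Pi.star_apply, Finset.sum_mul, Finset.mul_sum]
  rw [Finset.sum_comm, Finset.sum_comm (t := Finset.univ (α := ι)) (s := Finset.univ (α := ι))]
  refine Finset.sum_congr rfl fun j _ ↦ ?_
  rw [Finset.sum_comm]
  exact Finset.sum_congr rfl fun i _ ↦ Finset.sum_congr rfl fun p _ ↦ by ring

end Choi

section Decomposable

variable {n r : ℕ} {H : Matrix (Fin n) (Fin n) ℂ →ₗ[ℂ] Matrix (Fin r) (Fin r) ℂ}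

lemma isDecomposableMap_of_eq_sum_add_sum {N₁ N₂ : ℕ} (V : Fin N₁ → Matrix (Fin n) (Fin r) ℂ)
    (W : Fin N₂ → Matrix (Fin n) (Fin r) ℂ)
    (h : ∀ X, H X = ∑ p, (V p)ᴴ * X * V p + ∑ q, (W q)ᴴ * Xᵀ * W q) : IsDecomposableMap H :=
  ⟨N₁ + N₂, Fin.append V 0, Fin.append 0 W, fun X ↦ by simp [h, Fin.sum_univ_add]⟩

theorem isDecomposableMap_of_choi_apply {P Q : Matrix (Fin n × Fin r) (Fin n × Fin r) ℂ}
    (hP : P.PosSemidef) (hQ : Q.PosSemidef)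
    (h : ∀ i j k l, choi H (i, k) (j, l) = P (i, k) (j, l) + Q (j, k) (i, l)) :
    IsDecomposableMap H := by
  obtain ⟨N₁, v, rfl⟩ := posSemidef_iff_eq_sum_vecMulVec.1 hP
  obtain ⟨N₂, w, rfl⟩ := posSemidef_iff_eq_sum_vecMulVec.1 hQ
  refine isDecomposableMap_of_eq_sum_add_sum (fun p ↦ of fun i k ↦ star (v p (i, k)))
    (fun q ↦ of fun i k ↦ star (w q (i, k))) fun X ↦ ?_
  ext k l
  rw [Matrix.add_apply, sum_conjTranspose_mul_mul_apply v, sum_conjTranspose_mul_mul_apply w,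
    Finset.sum_comm (f := fun i j ↦ Xᵀ i j * _), map_apply_eq_sum_choi]
  simp only [h, mul_add, Finset.sum_add_distrib, transpose_apply]

lemma isDecomposableMap_of_forall_eq_tensorVector
    (hH : ∀ P : Matrix (Fin n) (Fin n) ℂ, P.PosSemidef → (H P).PosSemidef)
    (hprod : ∀ w : Fin n × Fin r → ℂ, ∃ u f, w = tensorVector u f) : IsDecomposableMap H := by
  have hpos : (choi H).PosSemidef :=
    PosSemidef.of_dotProduct_mulVec_nonneg (isHermitian_choi hH) fun w ↦ by
      obtain ⟨u, f, rfl⟩ := hprod w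
      exact star_tensorVector_dotProduct_choi_mulVec_nonneg hH u f
  exact isDecomposableMap_of_choi_apply hpos PosSemidef.zero (by simp)

theorem isDecomposableMap_of_domain_one
    {H : Matrix (Fin 1) (Fin 1) ℂ →ₗ[ℂ] Matrix (Fin r) (Fin r) ℂ}
    (hH : ∀ P : Matrix (Fin 1) (Fin 1) ℂ, P.PosSemidef → (H P).PosSemidef) :
    IsDecomposableMap H :=
  isDecomposableMap_of_forall_eq_tensorVector hH fun w ↦ ⟨1, fun k ↦ w (0, k), by
    ext ⟨i, k⟩
    simp [tensorVector, Subsingleton.elim i 0]⟩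

theorem isDecomposableMap_of_codomain_one
    {H : Matrix (Fin n) (Fin n) ℂ →ₗ[ℂ] Matrix (Fin 1) (Fin 1) ℂ}
    (hH : ∀ P : Matrix (Fin n) (Fin n) ℂ, P.PosSemidef → (H P).PosSemidef) :
    IsDecomposableMap H :=
  isDecomposableMap_of_forall_eq_tensorVector hH fun w ↦ ⟨fun i ↦ w (i, 0), 1, by
    ext ⟨i, k⟩
    simp [tensorVector, Subsingleton.elim k 0]⟩

theorem isDecomposableMap_of_domain_two (hr : r ≤ 3)
    {H : Matrix (Fin 2) (Fin 2) ℂ →ₗ[ℂ] Matrix (Fin r) (Fin r) ℂ}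
    (hH : ∀ P : Matrix (Fin 2) (Fin 2) ℂ, P.PosSemidef → (H P).PosSemidef) :
    IsDecomposableMap H := by
  obtain ⟨P, Q, hP, hQ, hPQ⟩ := exists_posSemidef_forall_apply_eq_add (by simpa using hr)
    (isHermitian_choi hH) (star_tensorVector_dotProduct_choi_mulVec_nonneg hH)
  exact isDecomposableMap_of_choi_apply hP hQ hPQ

/- Transposing the second tensor factor is the full transpose after transposing the first one, so
`Q` is replaced by `Qᵀ`. -/
theorem isDecomposableMap_of_codomain_two (hn : n ≤ 3)
    {H : Matrix (Fin n) (Fin n) ℂ →ₗ[ℂ] Matrix (Fin 2) (Fin 2) ℂ}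
    (hH : ∀ P : Matrix (Fin n) (Fin n) ℂ, P.PosSemidef → (H P).PosSemidef) :
    IsDecomposableMap H := by
  set e := Equiv.prodComm (Fin n) (Fin 2)
  obtain ⟨P, Q, hP, hQ, hPQ⟩ := exists_posSemidef_forall_apply_eq_add (by simpa using hn)
    ((isHermitian_choi hH).submatrix e.symm) fun u f ↦ by
      have hcomp : tensorVector u f ∘ e = tensorVector f u := by
        ext a
        exact mul_comm _ _
      rw [submatrix_mulVec_equiv, Equiv.symm_symm, dotProduct_comp_equiv_symm, hcomp]
      have h := star_tensorVector_dotProduct_choi_mulVec_nonneg hH f u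
      rwa [← hcomp] at h ⊢
  exact isDecomposableMap_of_choi_apply (hP.submatrix e) (hQ.submatrix e).transpose
    fun i j k l ↦ hPQ k l i j

end Decomposable

lemma eq_one_or_eq_two_and_le_three {n r : ℕ} (hn : 1 ≤ n) (hr : 1 ≤ r)
    (hdim : n * r ≤ 6 ∨ min n r = 1) : n = 1 ∨ r = 1 ∨ (n = 2 ∧ r ≤ 3) ∨ (r = 2 ∧ n ≤ 3) := by
  by_contra! h
  have hn2 : 2 ≤ n := by omega
  have hr2 : 2 ≤ r := by omega
  have h7 : 6 < n * r := by
    rcases hn2.eq_or_lt with rfl | hn3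
    · omega
    · rcases hr2.eq_or_lt with rfl | hr3
      · omega
      · nlinarith
  omega

theorem positive_map_decomposable_of_low_dimension
    (n r : ℕ) (hn : 1 ≤ n) (hr : 1 ≤ r) (hdim : n * r ≤ 6 ∨ min n r = 1)
    (H : Matrix (Fin n) (Fin n) ℂ →ₗ[ℂ] Matrix (Fin r) (Fin r) ℂ)
    (hH : ∀ P : Matrix (Fin n) (Fin n) ℂ, P.PosSemidef → (H P).PosSemidef) :
    IsDecomposableMap H := by
  rcases eq_one_or_eq_two_and_le_three hn hr hdim with rfl | rfl | ⟨rfl, hr3⟩ | ⟨rfl, hn3⟩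
  · exact isDecomposableMap_of_domain_one hH
  · exact isDecomposableMap_of_codomain_one hH
  · exact isDecomposableMap_of_domain_two hr3 hH
  · exact isDecomposableMap_of_codomain_two hn3 hH
end
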